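/- An element f = Σ_{w∈M} γ(w) w of F belongs to 𝒰 if and only if for all i ≠ j and all words z, t ∈ M one has Σ_{k=0}^{1−a_{ij}} (−1)^k [1−a_{ij} choose k]_i · γ(z · w_i^k w_j w_i^{1−a_{ij}−k} · t) = 0, where z · w_i^k w_j w_i^{1−a_{ij}−k} · t denotes the concatenated word. -/

import Mathlib

open scoped BigOperators

noncomputable section

/-- The field `ℚ(q)` of rational functions over `ℚ`. -/
abbrev K : Type := RatFunc ℚ

/-- The indeterminate `q`. -/
abbrev qq : K := RatFunc.X

/-- Words on the alphabet `{w_1, …, w_r}` (the free monoid `M`). -/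
abbrev Word (r : ℕ) := List (Fin r)

/-- The space `F` with basis the words, as finitely supported families of coefficients. -/
abbrev FA (r : ℕ) := Word r →₀ K

variable {r : ℕ}

/-- `(|w|, |x|)` : the symmetric bilinear form evaluated on the degrees of two words,
where `p i j = (α_i, α_j)` is the form on simple roots. -/
def pairW (p : Fin r → Fin r → ℤ) (w x : Word r) : ℤ :=
  (w.map fun i => (x.map fun j => p i j).sum).sum

/-- Auxiliary q-shuffle on *reversed* words:
`shAux p w x` is the q-shuffle of `w.reverse` and `x.reverse`; it implements the recursion
`(w·a) * (x·b) = (w * (x·b))·a + q^{-(|w·a|,|b|)} ((w·a) * x)·b`, `w[] * x = x * w[] = x`. -/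
def shAux (p : Fin r → Fin r → ℤ) : Word r → Word r → FA r
  | [], x => Finsupp.single x.reverse 1
  | w, [] => Finsupp.single w.reverse 1
  | a :: w, b :: x =>
      Finsupp.mapDomain (fun u => u ++ [a]) (shAux p w (b :: x))
      + (qq ^ (-(pairW p (a :: w) [b]))) •
          Finsupp.mapDomain (fun u => u ++ [b]) (shAux p (a :: w) x)
  termination_by w x => w.length + x.length
  decreasing_by all_goals (first | (simp only [List.length_cons]; omega) | omega)

/-- The q-shuffle product `*` on `F`, extended bilinearly from words. -/
def shuffle (p : Fin r → Fin r → ℤ) (f g : FA r) : FA r :=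
  f.sum fun w c => g.sum fun x d => (c * d) • shAux p w.reverse x.reverse

/-- Membership in `𝒰`, the `ℚ(q)`-subalgebra of `(F, *)` generated by the letters `w_i`. -/
inductive InU (p : Fin r → Fin r → ℤ) : FA r → Prop
  | letter (i : Fin r) : InU p (Finsupp.single [i] 1)
  | one : InU p (Finsupp.single ([] : Word r) 1)
  | add : ∀ {f g : FA r}, InU p f → InU p g → InU p (f + g)
  | smul : ∀ (c : K) {f : FA r}, InU p f → InU p (c • f)
  | mul : ∀ {f g : FA r}, InU p f → InU p g → InU p (shuffle p f g)

/-- The q-integer `[n]_i = (q_i^n − q_i^{−n})/(q_i − q_i^{−1})` with `q_i = q^{d_i}`. -/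
def qInt (di : ℤ) (n : ℤ) : K :=
  (qq ^ (di * n) - qq ^ (-(di * n))) / (qq ^ di - qq ^ (-di))

/-- The q-binomial coefficient `[m choose k]_i = [m]_i⋯[m−k+1]_i / ([k]_i⋯[1]_i)`. -/
def qBinom (di : ℤ) (m k : ℕ) : K :=
  (∏ t ∈ Finset.range k, qInt di ((m : ℤ) - t)) / (∏ t ∈ Finset.range k, qInt di ((t : ℤ) + 1))

/-- The data of the Cartan matrix `[a_{ij}]` of a finite-dimensional complex simple
Lie algebra of rank `r`: an integral matrix with `2` on the diagonal and nonpositive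
off-diagonal entries, symmetrizable by `d_i ∈ {1,2,3}`, whose symmetrization
`(α_i, α_j) = d_i a_{ij}` is positive definite, and which is indecomposable. -/
structure CartanData (r : ℕ) where
  a : Fin r → Fin r → ℤ
  d : Fin r → ℤ
  diag : ∀ i, a i i = 2
  offdiag : ∀ i j, i ≠ j → a i j ≤ 0
  dval : ∀ i, d i = 1 ∨ d i = 2 ∨ d i = 3
  dsymm : ∀ i j, d i * a i j = d j * a j i
  posdef : ∀ v : Fin r → ℚ, v ≠ 0 → 0 < ∑ i, ∑ j, v i * v j * ((d i * a i j : ℤ) : ℚ)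
  indec : ∀ s : Finset (Fin r), s.Nonempty → s ≠ Finset.univ →
    ∃ i ∈ s, ∃ j, j ∉ s ∧ a i j ≠ 0

/-- The symmetric bilinear form `(α_i, α_j) = d_i a_{ij}` on simple roots. -/
def CartanData.p (C : CartanData r) : Fin r → Fin r → ℤ := fun i j => C.d i * C.a i j

set_option linter.unusedSimpArgs false

section AlgSide

variable {k : Type*} [Field k] {r : ℕ}

/-- diagonal automorphism -/
def tK (c : Fin r → Fin r → k) (l : Fin r) : FreeAlgebra k (Fin r) →ₐ[k] FreeAlgebra k (Fin r) :=
  FreeAlgebra.lift k (fun j => c l j • FreeAlgebra.ι k j)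

/-- matrix homomorphism encoding the left skew derivation -/
def tML (c : Fin r → Fin r → k) (l : Fin r) :
    FreeAlgebra k (Fin r) →ₐ[k] Matrix (Fin 2) (Fin 2) (FreeAlgebra k (Fin r)) :=
  FreeAlgebra.lift k (fun j => !![c l j • FreeAlgebra.ι k j, if l = j then 1 else 0;
    0, FreeAlgebra.ι k j])

/-- matrix homomorphism encoding the right skew derivation -/
def tMR (c : Fin r → Fin r → k) (l : Fin r) :
    FreeAlgebra k (Fin r) →ₐ[k] Matrix (Fin 2) (Fin 2) (FreeAlgebra k (Fin r)) :=
  FreeAlgebra.lift k (fun j => !![FreeAlgebra.ι k j, if l = j then 1 else 0;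
    0, c l j • FreeAlgebra.ι k j])

lemma tML_entries (c : Fin r → Fin r → k) (l : Fin r) (x : FreeAlgebra k (Fin r)) :
    tML c l x 0 0 = tK c l x ∧ tML c l x 1 1 = x ∧ tML c l x 1 0 = 0 := by
  induction x using FreeAlgebra.induction with
  | grade0 a => 
    rw [AlgHom.commutes, AlgHom.commutes]
    simp [Matrix.algebraMap_matrix_apply]
  | grade1 j => simp [tML, tK]
  | mul x y hx hy => 
    simp only [map_mul, Matrix.mul_apply, Fin.sum_univ_two, hx, hy]
    simp
  | add x y hx hy => simp [hx, hy]

lemma tMR_entries (c : Fin r → Fin r → k) (l : Fin r) (x : FreeAlgebra k (Fin r)) :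
    tMR c l x 0 0 = x ∧ tMR c l x 1 1 = tK c l x ∧ tMR c l x 1 0 = 0 := by
  induction x using FreeAlgebra.induction with
  | grade0 a => 
    rw [AlgHom.commutes, AlgHom.commutes]
    simp [Matrix.algebraMap_matrix_apply]
  | grade1 j => simp [tMR, tK]
  | mul x y hx hy => 
    simp only [map_mul, Matrix.mul_apply, Fin.sum_univ_two, hx, hy]
    simp
  | add x y hx hy => simp [hx, hy]

/-- left skew derivation -/
def tL (c : Fin r → Fin r → k) (l : Fin r) : FreeAlgebra k (Fin r) →ₗ[k] FreeAlgebra k (Fin r) where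
  toFun x := tML c l x 0 1
  map_add' x y := by simp
  map_smul' a x := by simp

/-- right skew derivation -/
def tR (c : Fin r → Fin r → k) (l : Fin r) : FreeAlgebra k (Fin r) →ₗ[k] FreeAlgebra k (Fin r) where
  toFun x := tMR c l x 0 1
  map_add' x y := by simp
  map_smul' a x := by simp

lemma tK_ι (c : Fin r → Fin r → k) (l j : Fin r) :
    tK c l (FreeAlgebra.ι k j) = c l j • FreeAlgebra.ι k j := by simp [tK]

lemma tL_ι (c : Fin r → Fin r → k) (l j : Fin r) :
    tL c l (FreeAlgebra.ι k j) = if l = j then 1 else 0 := by simp [tL, tML]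

lemma tR_ι (c : Fin r → Fin r → k) (l j : Fin r) :
    tR c l (FreeAlgebra.ι k j) = if l = j then 1 else 0 := by simp [tR, tMR]

lemma tL_one (c : Fin r → Fin r → k) (l : Fin r) : tL c l 1 = 0 := by simp [tL]

lemma tR_one (c : Fin r → Fin r → k) (l : Fin r) : tR c l 1 = 0 := by simp [tR]

lemma tL_mul (c : Fin r → Fin r → k) (l : Fin r) (x y : FreeAlgebra k (Fin r)) :
    tL c l (x * y) = tL c l x * y + tK c l x * tL c l y := by
  simp only [tL, LinearMap.coe_mk, AddHom.coe_mk, map_mul, Matrix.mul_apply, Fin.sum_univ_two,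
    tML_entries]
  rw [add_comm]

lemma tR_mul (c : Fin r → Fin r → k) (l : Fin r) (x y : FreeAlgebra k (Fin r)) :
    tR c l (x * y) = tR c l x * tK c l y + x * tR c l y := by
  simp only [tR, LinearMap.coe_mk, AddHom.coe_mk, map_mul, Matrix.mul_apply, Fin.sum_univ_two,
    tMR_entries]
  rw [add_comm]

/-- right induction -/
lemma free_right_ind (S : Submodule k (FreeAlgebra k (Fin r))) (h1 : 1 ∈ S)
    (hm : ∀ x ∈ S, ∀ j, x * FreeAlgebra.ι k j ∈ S) (x : FreeAlgebra k (Fin r)) : x ∈ S := by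
  have key : ∀ y : FreeAlgebra k (Fin r), ∀ x ∈ S, x * y ∈ S := by
    intro y
    induction y using FreeAlgebra.induction with
    | grade0 a => 
      intro x hx
      rw [← Algebra.commutes, ← Algebra.smul_def]; exact S.smul_mem _ hx
    | grade1 j => exact fun x hx => hm x hx j
    | mul y z hy hz => 
      intro x hx
      rw [← mul_assoc]; exact hz _ (hy _ hx)
    | add y z hy hz => 
      intro x hx
      rw [mul_add]; exact S.add_mem (hy _ hx) (hz _ hx)
  simpa using key x 1 h1

/-- left induction -/
lemma free_left_ind (S : Submodule k (FreeAlgebra k (Fin r))) (h1 : 1 ∈ S)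
    (hm : ∀ x ∈ S, ∀ j, FreeAlgebra.ι k j * x ∈ S) (x : FreeAlgebra k (Fin r)) : x ∈ S := by
  have key : ∀ y : FreeAlgebra k (Fin r), ∀ x ∈ S, y * x ∈ S := by
    intro y
    induction y using FreeAlgebra.induction with
    | grade0 a => 
      intro x hx
      rw [← Algebra.smul_def]; exact S.smul_mem _ hx
    | grade1 j => exact fun x hx => hm x hx j
    | mul y z hy hz => 
      intro x hx
      rw [mul_assoc]; exact hy _ (hz _ hx)
    | add y z hy hz => 
      intro x hx
      rw [add_mul]; exact S.add_mem (hy _ hx) (hz _ hx)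
  simpa using key x 1 h1

lemma tK_comm (c : Fin r → Fin r → k) (l j : Fin r) (x : FreeAlgebra k (Fin r)) :
    tK c l (tK c j x) = tK c j (tK c l x) := by
  have : (tK c l).comp (tK c j) = (tK c j).comp (tK c l) := by
    apply FreeAlgebra.hom_ext
    funext i
    simp [tK_ι, smul_smul, mul_comm]
  exact DFunLike.congr_fun this x

lemma tL_tK (c : Fin r → Fin r → k) (l j : Fin r) (x : FreeAlgebra k (Fin r)) :
    tL c j (tK c l x) = c l j • tK c l (tL c j x) := by
  induction x using FreeAlgebra.induction with
  | grade0 a => simp [Algebra.algebraMap_eq_smul_one, tL_one]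
  | grade1 i => 
    simp only [tK_ι, map_smul, tL_ι]
    split_ifs with h
    · subst h; simp
    · simp
  | mul y z hy hz => 
    simp only [map_mul, tL_mul, hy, hz, map_add, smul_add, smul_mul_assoc, mul_smul_comm,
      tK_comm c j l]
  | add y z hy hz => simp only [map_add, hy, hz, smul_add]

lemma tR_tK (c : Fin r → Fin r → k) (l j : Fin r) (x : FreeAlgebra k (Fin r)) :
    tR c j (tK c l x) = c l j • tK c l (tR c j x) := by
  induction x using FreeAlgebra.induction with
  | grade0 a => simp [Algebra.algebraMap_eq_smul_one, tR_one]
  | grade1 i => 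
    simp only [tK_ι, map_smul, tR_ι]
    split_ifs with h
    · subst h; simp
    · simp
  | mul y z hy hz => 
    simp only [map_mul, tR_mul, hy, hz, map_add, smul_add, smul_mul_assoc, mul_smul_comm,
      tK_comm c j l]
  | add y z hy hz => simp only [map_add, hy, hz, smul_add]

/-- The skew adjoint action `y ↦ y θ_i - θ_i K_i(y)`. -/
def tF (c : Fin r → Fin r → k) (i : Fin r) : FreeAlgebra k (Fin r) →ₗ[k] FreeAlgebra k (Fin r) where
  toFun y := y * FreeAlgebra.ι k i - FreeAlgebra.ι k i * tK c i y
  map_add' x y := by simp only [map_add, add_mul, mul_add]; abel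
  map_smul' a x := by simp [smul_sub]

lemma tF_apply (c : Fin r → Fin r → k) (i : Fin r) (y : FreeAlgebra k (Fin r)) :
    tF c i y = y * FreeAlgebra.ι k i - FreeAlgebra.ι k i * tK c i y := rfl

lemma tF_one (c : Fin r → Fin r → k) (i : Fin r) : tF c i 1 = 0 := by simp [tF_apply]

lemma tF_mul (c : Fin r → Fin r → k) (i : Fin r) (y z : FreeAlgebra k (Fin r)) :
    tF c i (y * z) = y * tF c i z + tF c i y * tK c i z := by
  simp only [tF_apply, map_mul]; noncomm_ring

lemma tK_tF (c : Fin r → Fin r → k) (l i : Fin r) (y : FreeAlgebra k (Fin r)) :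
    tK c l (tF c i y) = c l i • tF c i (tK c l y) := by
  simp only [tF_apply, map_sub, map_mul, tK_ι, smul_sub, smul_mul_assoc, mul_smul_comm,
      tK_comm c l i]

lemma tK_tF_pow (c : Fin r → Fin r → k) (l i : Fin r) (n : ℕ) (y : FreeAlgebra k (Fin r)) :
    tK c l ((tF c i ^ n) y) = c l i ^ n • (tF c i ^ n) (tK c l y) := by
  induction n generalizing y with
  | zero => simp
  | succ n ih => 
    rw [pow_succ', Module.End.mul_apply, tK_tF, ih, Module.End.mul_apply, map_smul, smul_smul,
      pow_succ' (c l i)]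

lemma tL_tF_self (c : Fin r → Fin r → k) (i : Fin r) (y : FreeAlgebra k (Fin r)) :
    tL c i (tF c i y) = tL c i y * FreeAlgebra.ι k i
      - (c i i * c i i) • (FreeAlgebra.ι k i * tK c i (tL c i y)) := by
  simp only [tF_apply, map_sub, tL_mul, tL_ι, tK_ι, tL_tK, if_true, smul_mul_assoc, mul_smul_comm,
    smul_smul]
  simp only [one_mul, mul_one]
  abel

lemma tL_tF_ne (c : Fin r → Fin r → k) (i l : Fin r) (h : l ≠ i) (y : FreeAlgebra k (Fin r)) :
    tL c l (tF c i y) = tL c l y * FreeAlgebra.ι k i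
      - (c l i * c i l) • (FreeAlgebra.ι k i * tK c i (tL c l y)) := by
  simp only [tF_apply, map_sub, tL_mul, tL_ι, tK_ι, tL_tK, if_neg h, smul_mul_assoc, mul_smul_comm,
    smul_smul]
  simp [mul_comm]

lemma tR_tF_self (c : Fin r → Fin r → k) (i : Fin r) (y : FreeAlgebra k (Fin r)) :
    tR c i (tF c i y) = c i i • tF c i (tR c i y) + y - tK c i (tK c i y) := by
  simp only [tF_apply, map_sub, tR_mul, tR_ι, tK_ι, tR_tK, if_true, smul_mul_assoc, mul_smul_comm,
    smul_smul, smul_sub, mul_one, one_mul]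
  abel

lemma tR_tF_ne (c : Fin r → Fin r → k) (i l : Fin r) (h : l ≠ i) (hc : c l i = c i l)
    (y : FreeAlgebra k (Fin r)) :
    tR c l (tF c i y) = c i l • tF c i (tR c l y) := by
  simp only [tF_apply, map_sub, tR_mul, tR_ι, tK_ι, tR_tK, if_neg h, smul_mul_assoc, mul_smul_comm,
    smul_smul, smul_sub, mul_zero, zero_mul, add_zero, zero_add, hc]

/-- Serre elements `F_i^n θ_j`. -/
def tS (c : Fin r → Fin r → k) (i j : Fin r) (n : ℕ) : FreeAlgebra k (Fin r) :=
  (tF c i ^ n) (FreeAlgebra.ι k j)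

/-- the rank one constant relation -/
lemma tR_tF_pow (c : Fin r → Fin r → k) (i : Fin r) (J : Submodule k (FreeAlgebra k (Fin r)))
    (hJF : ∀ x ∈ J, tF c i x ∈ J) (x : FreeAlgebra k (Fin r)) (κ : k) (hx : tK c i x = κ • x)
    (hR : tR c i x ∈ J) (h1 : c i i ≠ 1) (n : ℕ) :
    tR c i ((tF c i ^ (n + 1)) x) -
      ((c i i ^ (n + 1) - 1) * (1 - κ ^ 2 * c i i ^ n) / (c i i - 1)) • (tF c i ^ n) x ∈ J := by
  have h1' : c i i - 1 ≠ 0 := sub_ne_zero.2 h1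
  have hk : ∀ n, tK c i ((tF c i ^ n) x) = (c i i ^ n * κ) • (tF c i ^ n) x := by
    intro n; rw [tK_tF_pow, hx, map_smul, smul_smul]
  induction n with
  | zero => 
    have h := hJF _ hR
    have : tR c i ((tF c i ^ (0 + 1)) x) -
      ((c i i ^ (0 + 1) - 1) * (1 - κ ^ 2 * c i i ^ 0) / (c i i - 1)) • (tF c i ^ 0) x
        = c i i • tF c i (tR c i x) := by
      rw [show ((c i i ^ (0 + 1) - 1) * (1 - κ ^ 2 * c i i ^ 0) / (c i i - 1)) = 1 - κ * κ by
        field_simp; ring]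
      simp only [zero_add, pow_one, pow_zero, Module.End.one_apply, tR_tF_self, hx, map_smul,
        smul_smul]
      module
    rw [this]; exact J.smul_mem _ h
  | succ n ih => 
    have h := J.smul_mem (c i i) (hJF _ ih)
    convert h using 1
    have e : tF c i ((tF c i ^ n) x) = (tF c i ^ (n+1)) x := by
      rw [pow_succ', Module.End.mul_apply]
    rw [pow_succ' (tF c i) (n+1), Module.End.mul_apply, tR_tF_self, hk, map_smul, hk, map_sub,
      map_smul, e, smul_sub, smul_smul, smul_smul]
    set A := (tF c i ^ (n+1)) x
    set B := tF c i (tR c i A)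
    have : ((c i i ^ (n + 1 + 1) - 1) * (1 - κ ^ 2 * c i i ^ (n + 1)) / (c i i - 1))
      = c i i * ((c i i ^ (n + 1) - 1) * (1 - κ ^ 2 * c i i ^ n) / (c i i - 1))
        + 1 - (c i i ^ (n+1) * κ * (c i i ^ (n+1) * κ)) := by
      field_simp; ring
    rw [this]
    module

end AlgSide

set_option linter.unusedSimpArgs false

section AlgSide2

variable {k : Type*} [Field k] {r : ℕ}

/-- The two-sided Serre ideal, as a submodule. -/
def tJ (c : Fin r → Fin r → k) (m : Fin r → Fin r → ℕ) : Submodule k (FreeAlgebra k (Fin r)) :=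
  Submodule.span k {x | ∃ i j, i ≠ j ∧ ∃ a b, x = a * tS c i j (m i j + 1) * b}

lemma tJ_mul_left (c : Fin r → Fin r → k) (m : Fin r → Fin r → ℕ) (x y : FreeAlgebra k (Fin r))
    (hy : y ∈ tJ c m) : x * y ∈ tJ c m := by
  induction hy using Submodule.span_induction with
  | mem y hy =>
    obtain ⟨i, j, hij, a, b, rfl⟩ := hy
    exact Submodule.subset_span ⟨i, j, hij, x * a, b, by simp only [mul_assoc]⟩
  | zero => simp
  | add y z _ _ hy hz => rw [mul_add]; exact Submodule.add_mem _ hy hz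
  | smul a y _ hy => rw [mul_smul_comm]; exact Submodule.smul_mem _ _ hy

lemma tJ_mul_right (c : Fin r → Fin r → k) (m : Fin r → Fin r → ℕ) (x y : FreeAlgebra k (Fin r))
    (hy : y ∈ tJ c m) : y * x ∈ tJ c m := by
  induction hy using Submodule.span_induction with
  | mem y hy =>
    obtain ⟨i, j, hij, a, b, rfl⟩ := hy
    exact Submodule.subset_span ⟨i, j, hij, a, b * x, by simp only [mul_assoc]⟩
  | zero => simp
  | add y z _ _ hy hz => rw [add_mul]; exact Submodule.add_mem _ hy hz
  | smul a y _ hy => rw [smul_mul_assoc]; exact Submodule.smul_mem _ _ hy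

lemma tJ_serre (c : Fin r → Fin r → k) (m : Fin r → Fin r → ℕ) (i j : Fin r) (h : i ≠ j) :
    tS c i j (m i j + 1) ∈ tJ c m :=
  Submodule.subset_span ⟨i, j, h, 1, 1, by simp⟩

lemma tK_tS (c : Fin r → Fin r → k) (l i j : Fin r) (n : ℕ) :
    tK c l (tS c i j n) = (c l i ^ n * c l j) • tS c i j n := by
  rw [tS, tK_tF_pow, tK_ι, map_smul, smul_smul]

lemma tJ_K (c : Fin r → Fin r → k) (m : Fin r → Fin r → ℕ) (l : Fin r) (y : FreeAlgebra k (Fin r))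
    (hy : y ∈ tJ c m) : tK c l y ∈ tJ c m := by
  induction hy using Submodule.span_induction with
  | mem y hy =>
    obtain ⟨i, j, hij, a, b, rfl⟩ := hy
    rw [map_mul, map_mul, tK_tS]
    exact tJ_mul_right _ _ _ _ (tJ_mul_left _ _ _ _ (Submodule.smul_mem _ _ (tJ_serre c m i j hij)))
  | zero => simp
  | add y z _ _ hy hz => rw [map_add]; exact Submodule.add_mem _ hy hz
  | smul a y _ hy => rw [map_smul]; exact Submodule.smul_mem _ _ hy

lemma tJ_F (c : Fin r → Fin r → k) (m : Fin r → Fin r → ℕ) (l : Fin r) (y : FreeAlgebra k (Fin r))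
    (hy : y ∈ tJ c m) : tF c l y ∈ tJ c m :=
  Submodule.sub_mem _ (tJ_mul_right _ _ _ _ hy) (tJ_mul_left _ _ _ _ (tJ_K _ _ _ _ hy))

lemma tJ_F_pow (c : Fin r → Fin r → k) (m : Fin r → Fin r → ℕ) (l : Fin r) (n : ℕ)
    (y : FreeAlgebra k (Fin r))
    (hy : y ∈ tJ c m) : (tF c l ^ n) y ∈ tJ c m := by
  induction n with
  | zero => simpa
  | succ n ih => rw [pow_succ', Module.End.mul_apply]; exact tJ_F _ _ _ _ ih

lemma tK_pow_self (c : Fin r → Fin r → k) (i : Fin r) (n : ℕ) :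
    tK c i (FreeAlgebra.ι k i ^ n) = c i i ^ n • FreeAlgebra.ι k i ^ n := by
  rw [map_pow, tK_ι, smul_pow]

lemma tL_tS_self (c : Fin r → Fin r → k) (i j : Fin r) (h : i ≠ j) (n : ℕ) :
    tL c i (tS c i j n) = 0 := by
  induction n with
  | zero => simp [tS, tL_ι, h]
  | succ n ih =>
    rw [tS] at ih
    rw [tS, pow_succ', Module.End.mul_apply, tL_tF_self, ih]; simp

lemma tL_tS_ne (c : Fin r → Fin r → k) (i j l : Fin r) (h : l ≠ i) (n : ℕ) :
    tL c l (tS c i j n) =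
      ((if l = j then 1 else 0) * ∏ t ∈ Finset.range n, (1 - c l i * c i l * c i i ^ t)) •
        FreeAlgebra.ι k i ^ n := by
  induction n with
  | zero => 
    simp only [tS, pow_zero, Module.End.one_apply, tL_ι]
    split_ifs <;> simp
  | succ n ih =>
    rw [tS] at ih
    rw [tS, pow_succ', Module.End.mul_apply, tL_tF_ne _ _ _ h, ih, Finset.prod_range_succ,
      map_smul, tK_pow_self, smul_mul_assoc, mul_smul_comm, mul_smul_comm, ← pow_succ, ← pow_succ']
    module

lemma tR_tS_ne (c : Fin r → Fin r → k) (i j l : Fin r) (h : l ≠ i) (hc : c l i = c i l) (n : ℕ) :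
    tR c l (tS c i j (n + 1)) = 0 := by
  have : ∀ n, tR c l (tS c i j n) = c i l ^ n • (tF c i ^ n) (if l = j then 1 else 0) := by
    intro n
    induction n with
    | zero => simp [tS, tR_ι]
    | succ n ih =>
      rw [tS] at ih
      rw [tS, pow_succ', Module.End.mul_apply, tR_tF_ne _ _ _ h hc, ih, map_smul, smul_smul,
        pow_succ' (c i l), Module.End.mul_apply]
  rw [this, pow_succ (tF c i), Module.End.mul_apply]
  split_ifs <;> simp [tF_one]

lemma tL_tS (c : Fin r → Fin r → k) (hc : ∀ i j, c i j = c j i) (i j l : Fin r) (h : i ≠ j) (n : ℕ)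
    (hs : c i j ^ 2 * c i i ^ n = 1) :
    tL c l (tS c i j (n + 1)) = 0 := by
  by_cases hl : l = i
  · subst hl; exact tL_tS_self _ _ _ h _
  · rw [tL_tS_ne _ _ _ _ hl]
    split_ifs with hj
    · subst hj
      rw [Finset.prod_range_succ, hc l i, ← pow_two, hs]; simp
    · simp

lemma tR_tS (c : Fin r → Fin r → k) (hc : ∀ i j, c i j = c j i) (h1 : ∀ i, c i i ≠ 1)
    (i j l : Fin r) (h : i ≠ j) (n : ℕ)
    (hs : c i j ^ 2 * c i i ^ n = 1) :
    tR c l (tS c i j (n + 1)) = 0 := by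
  by_cases hl : l = i
  · subst hl
    have := tR_tF_pow c l ⊥ (by simp) (FreeAlgebra.ι k j) (c l j) (tK_ι _ _ _)
      (by simp [tR_ι, h]) (h1 l) n
    rw [hs] at this
    simpa [tS] using this
  · exact tR_tS_ne _ _ _ _ hl (hc _ _) _

lemma tJ_L (c : Fin r → Fin r → k) (m : Fin r → Fin r → ℕ) (hc : ∀ i j, c i j = c j i)
    (hs : ∀ i j, i ≠ j → c i j ^ 2 * c i i ^ (m i j) = 1) (l : Fin r)
    (y : FreeAlgebra k (Fin r)) (hy : y ∈ tJ c m) : tL c l y ∈ tJ c m := by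
  induction hy using Submodule.span_induction with
  | mem y hy =>
    obtain ⟨i, j, hij, a, b, rfl⟩ := hy
    rw [tL_mul, tL_mul, tL_tS c hc i j l hij _ (hs i j hij), mul_zero, add_zero]
    exact Submodule.add_mem _
      (tJ_mul_right _ _ _ _ (tJ_mul_left _ _ _ _ (tJ_serre c m i j hij)))
      (tJ_mul_right _ _ _ _ (tJ_K _ _ _ _ (tJ_mul_left _ _ _ _ (tJ_serre c m i j hij))))
  | zero => simp
  | add y z _ _ hy hz => rw [map_add]; exact Submodule.add_mem _ hy hz
  | smul a y _ hy => rw [map_smul]; exact Submodule.smul_mem _ _ hy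

lemma tJ_R (c : Fin r → Fin r → k) (m : Fin r → Fin r → ℕ) (hc : ∀ i j, c i j = c j i)
    (h1 : ∀ i, c i i ≠ 1)
    (hs : ∀ i j, i ≠ j → c i j ^ 2 * c i i ^ (m i j) = 1) (l : Fin r)
    (y : FreeAlgebra k (Fin r)) (hy : y ∈ tJ c m) : tR c l y ∈ tJ c m := by
  induction hy using Submodule.span_induction with
  | mem y hy =>
    obtain ⟨i, j, hij, a, b, rfl⟩ := hy
    rw [tR_mul, tR_mul, tR_tS c hc h1 i j l hij _ (hs i j hij), mul_zero, add_zero]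
    exact Submodule.add_mem _
      (tJ_mul_right _ _ _ _ (tJ_mul_left _ _ _ _ (tJ_K _ _ _ _ (tJ_serre c m i j hij))))
      (tJ_mul_right _ _ _ _ (tJ_mul_left _ _ _ _ (tJ_serre c m i j hij)))
  | zero => simp
  | add y z _ _ hy hz => rw [map_add]; exact Submodule.add_mem _ hy hz
  | smul a y _ hy => rw [map_smul]; exact Submodule.smul_mem _ _ hy

/-- nilpotency of `F` is compatible with products -/
lemma tF_nil_mul (c : Fin r → Fin r → k) (m : Fin r → Fin r → ℕ) (i : Fin r) (h0 : c i i ≠ 0)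
    (n : ℕ) : ∀ (M N : ℕ) (y z : FreeAlgebra k (Fin r)), M + N = n → (tF c i ^ M) y ∈ tJ c m →
      (tF c i ^ N) z ∈ tJ c m → (tF c i ^ n) (y * z) ∈ tJ c m := by
  induction n with
  | zero =>
    intro M N y z h hy hz
    obtain ⟨rfl, rfl⟩ : M = 0 ∧ N = 0 := by omega
    simpa using tJ_mul_left _ _ _ _ hz
  | succ n ih =>
    intro M N y z h hy hz
    rcases M with _ | M
    · exact tJ_F_pow _ _ _ _ _ (tJ_mul_right _ _ _ _ (by simpa using hy))
    rcases N with _ | N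
    · exact tJ_F_pow _ _ _ _ _ (tJ_mul_left _ _ _ _ (by simpa using hz))
    rw [pow_succ, Module.End.mul_apply, tF_mul, map_add]
    refine Submodule.add_mem _ (ih (M+1) N _ _ (by omega) hy ?_) (ih M (N+1) _ _ (by omega) ?_ ?_)
    · rwa [pow_succ, Module.End.mul_apply] at hz
    · rwa [pow_succ, Module.End.mul_apply] at hy
    · have h2 := tJ_K c m i _ hz
      rw [tK_tF_pow] at h2
      exact (Submodule.smul_mem_iff _ (pow_ne_zero _ h0)).1 h2

/-- the good elements: killed by `L_i` and `F_i`-nilpotent modulo `J` -/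
def tB (c : Fin r → Fin r → k) (m : Fin r → Fin r → ℕ) (i : Fin r) :
    Submodule k (FreeAlgebra k (Fin r)) where
  carrier := {b | tL c i b = 0 ∧ ∃ N, (tF c i ^ N) b ∈ tJ c m}
  zero_mem' := ⟨by simp, 0, by simp⟩
  add_mem' := by
    rintro a b ⟨ha, M, hM⟩ ⟨hb, N, hN⟩
    refine ⟨by rw [map_add, ha, hb, add_zero], M + N, ?_⟩
    rw [map_add]
    refine Submodule.add_mem _ ?_ ?_
    · rw [add_comm, pow_add, Module.End.mul_apply]; exact tJ_F_pow _ _ _ _ _ hM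
    · rw [pow_add, Module.End.mul_apply]; exact tJ_F_pow _ _ _ _ _ hN
  smul_mem' := by
    rintro a b ⟨hb, N, hN⟩
    exact ⟨by rw [map_smul, hb, smul_zero], N, by rw [map_smul]; exact Submodule.smul_mem _ _ hN⟩

lemma tB_one (c : Fin r → Fin r → k) (m : Fin r → Fin r → ℕ) (i : Fin r) : 1 ∈ tB c m i :=
  ⟨tL_one _ _, 1, by simp [tF_one]⟩

lemma tB_mul (c : Fin r → Fin r → k) (m : Fin r → Fin r → ℕ) (i : Fin r) (h0 : c i i ≠ 0)
    (a b : FreeAlgebra k (Fin r)) (ha : a ∈ tB c m i) (hb : b ∈ tB c m i) : a * b ∈ tB c m i := by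
  obtain ⟨ha, M, hM⟩ := ha
  obtain ⟨hb, N, hN⟩ := hb
  exact ⟨by simp [tL_mul, ha, hb], M + N, tF_nil_mul c m i h0 _ M N _ _ rfl hM hN⟩

lemma tB_ι (c : Fin r → Fin r → k) (m : Fin r → Fin r → ℕ) (i j : Fin r) (h : i ≠ j) :
    FreeAlgebra.ι k j ∈ tB c m i :=
  ⟨by simp [tL_ι, h], m i j + 1, tJ_serre c m i j h⟩

lemma tB_K (c : Fin r → Fin r → k) (m : Fin r → Fin r → ℕ) (i : Fin r) (h0 : c i i ≠ 0)
    (b : FreeAlgebra k (Fin r)) (hb : b ∈ tB c m i) : tK c i b ∈ tB c m i := by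
  obtain ⟨hb, N, hN⟩ := hb
  refine ⟨by simp [tL_tK, hb], N, ?_⟩
  have h2 := tJ_K c m i _ hN
  rw [tK_tF_pow] at h2
  exact (Submodule.smul_mem_iff _ (pow_ne_zero _ h0)).1 h2

lemma tB_F (c : Fin r → Fin r → k) (m : Fin r → Fin r → ℕ) (i : Fin r)
    (b : FreeAlgebra k (Fin r)) (hb : b ∈ tB c m i) : tF c i b ∈ tB c m i := by
  obtain ⟨hb, N, hN⟩ := hb
  refine ⟨by simp [tL_tF_self, hb], N, ?_⟩
  rw [← Module.End.mul_apply, ← pow_succ, pow_succ', Module.End.mul_apply]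
  exact tJ_F _ _ _ _ hN

/-- filtration by powers of `θ_i` -/
def tD (c : Fin r → Fin r → k) (m : Fin r → Fin r → ℕ) (i : Fin r) :
    ℕ → Submodule k (FreeAlgebra k (Fin r))
  | 0 => ⊥
  | N + 1 => tD c m i N ⊔ (tB c m i).map (LinearMap.mulLeft k (FreeAlgebra.ι k i ^ N))

lemma tD_mono (c : Fin r → Fin r → k) (m : Fin r → Fin r → ℕ) (i : Fin r) :
    Monotone (tD c m i) :=
  monotone_nat_of_le_succ (fun _ => le_sup_left)

lemma tD_gen (c : Fin r → Fin r → k) (m : Fin r → Fin r → ℕ) (i : Fin r) (n : ℕ)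
    (b : FreeAlgebra k (Fin r)) (hb : b ∈ tB c m i) :
    FreeAlgebra.ι k i ^ n * b ∈ tD c m i (n + 1) :=
  (le_sup_right : _ ≤ tD c m i (n + 1)) (Submodule.mem_map.2 ⟨b, hb, rfl⟩)

lemma tD_mul (c : Fin r → Fin r → k) (m : Fin r → Fin r → ℕ) (i : Fin r) (h0 : c i i ≠ 0)
    (j : Fin r) (n : ℕ) : ∀ x ∈ tD c m i n, x * FreeAlgebra.ι k j ∈ tD c m i (n + 1) := by
  induction n with
  | zero => intro x hx; rw [(Submodule.mem_bot k).1 hx]; simp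
  | succ n ih =>
    intro x hx
    obtain ⟨y, hy, w, hw, rfl⟩ := Submodule.mem_sup.1 hx
    obtain ⟨b, hb, rfl⟩ := Submodule.mem_map.1 hw
    rw [add_mul]
    refine Submodule.add_mem _ (tD_mono c m i (Nat.le_succ _) (ih y hy)) ?_
    simp only [LinearMap.mulLeft_apply]
    by_cases hj : i = j
    · subst hj
      have : FreeAlgebra.ι k i ^ n * b * FreeAlgebra.ι k i = FreeAlgebra.ι k i ^ n * tF c i b
          + FreeAlgebra.ι k i ^ (n + 1) * tK c i b := by
        rw [tF_apply, pow_succ]; noncomm_ring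
      rw [this]
      exact Submodule.add_mem _ (tD_mono c m i (Nat.le_succ _) (tD_gen _ _ _ _ _ (tB_F _ _ _ _ hb)))
        (tD_gen _ _ _ _ _ (tB_K _ _ _ h0 _ hb))
    · rw [mul_assoc]
      exact tD_mono c m i (Nat.le_succ _)
        (tD_gen _ _ _ _ _ (tB_mul _ _ _ h0 _ _ hb (tB_ι _ _ _ _ hj)))

lemma tD_exists (c : Fin r → Fin r → k) (m : Fin r → Fin r → ℕ) (i : Fin r) (h0 : c i i ≠ 0)
    (x : FreeAlgebra k (Fin r)) : ∃ n, x ∈ tD c m i n := by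
  have := free_right_ind (⨆ n, tD c m i n)
    (Submodule.mem_iSup_of_mem 1 (by simpa using tD_gen c m i 0 1 (tB_one c m i)))
    (fun x hx j => by
      rw [Submodule.mem_iSup_of_directed _ (tD_mono c m i).directed_le] at hx ⊢
      obtain ⟨n, hn⟩ := hx
      exact ⟨n + 1, tD_mul c m i h0 j n x hn⟩) x
  rwa [Submodule.mem_iSup_of_directed _ (tD_mono c m i).directed_le] at this

lemma tL_pow_mul (c : Fin r → Fin r → k) (i : Fin r) (h1 : c i i ≠ 1) (n : ℕ)
    (b : FreeAlgebra k (Fin r)) (hb : tL c i b = 0) :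
    tL c i (FreeAlgebra.ι k i ^ (n + 1) * b) =
      ((c i i ^ (n + 1) - 1) / (c i i - 1)) • (FreeAlgebra.ι k i ^ n * b) := by
  have h1' : c i i - 1 ≠ 0 := sub_ne_zero.2 h1
  induction n with
  | zero =>
    rw [zero_add, pow_one, pow_one, div_self h1']
    simp [tL_mul, tL_ι, hb]
  | succ n ih =>
    rw [pow_succ', mul_assoc, tL_mul, ih, tL_ι, tK_ι, if_pos rfl, one_mul, smul_mul_assoc,
      mul_smul_comm, smul_smul, ← mul_assoc, ← pow_succ']
    have : (c i i ^ (n + 1 + 1) - 1) / (c i i - 1)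
      = 1 + c i i * ((c i i ^ (n + 1) - 1) / (c i i - 1)) := by field_simp; ring
    rw [this]
    module

lemma tL_pow_pow (c : Fin r → Fin r → k) (i : Fin r) (h1 : ∀ n, c i i ^ (n + 1) ≠ 1) (n : ℕ)
    (b : FreeAlgebra k (Fin r)) (hb : tL c i b = 0) :
    ∃ a : k, a ≠ 0 ∧ (tL c i ^ n) (FreeAlgebra.ι k i ^ n * b) = a • b := by
  have h1' : c i i ≠ 1 := by simpa using h1 0
  induction n with
  | zero => exact ⟨1, one_ne_zero, by simp⟩
  | succ n ih =>
    obtain ⟨a, ha, h⟩ := ih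
    refine ⟨((c i i ^ (n + 1) - 1) / (c i i - 1)) * a, mul_ne_zero (div_ne_zero
      (sub_ne_zero.2 (h1 n)) (sub_ne_zero.2 h1')) ha, ?_⟩
    rw [pow_succ, Module.End.mul_apply, tL_pow_mul c i h1' n b hb, map_smul, h, smul_smul]

lemma tL_pow_tD (c : Fin r → Fin r → k) (m : Fin r → Fin r → ℕ) (i : Fin r)
    (h1 : ∀ n, c i i ^ (n + 1) ≠ 1) (n : ℕ) :
    ∀ x ∈ tD c m i n, (tL c i ^ n) x = 0 := by
  induction n with
  | zero => intro x hx; rw [(Submodule.mem_bot k).1 hx]; simp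
  | succ n ih =>
    intro x hx
    obtain ⟨y, hy, w, hw, rfl⟩ := Submodule.mem_sup.1 hx
    obtain ⟨b, hb, rfl⟩ := Submodule.mem_map.1 hw
    obtain ⟨a, -, h⟩ := tL_pow_pow c i h1 n b hb.1
    rw [pow_succ', Module.End.mul_apply, map_add, ih y hy, LinearMap.mulLeft_apply, h, zero_add,
      map_smul, hb.1, smul_zero]

lemma tF_nil_of_tD (c : Fin r → Fin r → k) (m : Fin r → Fin r → ℕ) (i : Fin r)
    (hJL : ∀ x ∈ tJ c m, tL c i x ∈ tJ c m)
    (h1 : ∀ n, c i i ^ (n + 1) ≠ 1) (n : ℕ) :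
    ∀ x ∈ tD c m i n, tL c i x ∈ tJ c m → ∃ N, (tF c i ^ N) x ∈ tJ c m := by
  have hJL' : ∀ n, ∀ x, tL c i x ∈ tJ c m → (tL c i ^ (n + 1)) x ∈ tJ c m := by
    intro n x hx
    induction n with
    | zero => simpa using hx
    | succ n ih => rw [pow_succ', Module.End.mul_apply]; exact hJL _ ih
  induction n with
  | zero => intro x hx _; rw [(Submodule.mem_bot k).1 hx]; exact ⟨0, by simp⟩
  | succ n ih =>
    intro x hx hL
    obtain ⟨y, hy, w, hw, rfl⟩ := Submodule.mem_sup.1 hx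
    obtain ⟨b, hb, rfl⟩ := Submodule.mem_map.1 hw
    rcases n with _ | n
    · rw [(Submodule.mem_bot k).1 hy]
      obtain ⟨-, N, hN⟩ := hb
      exact ⟨N, by simpa using hN⟩
    · obtain ⟨a, ha, h⟩ := tL_pow_pow c i h1 (n + 1) b hb.1
      have h2 := hJL' n _ hL
      rw [map_add, tL_pow_tD c m i h1 (n + 1) y hy, LinearMap.mulLeft_apply, h, zero_add] at h2
      have hbJ : b ∈ tJ c m := (Submodule.smul_mem_iff _ ha).1 h2
      have hbJ' := tJ_mul_left c m (FreeAlgebra.ι k i ^ (n + 1)) b hbJ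
      rw [LinearMap.mulLeft_apply] at hL ⊢
      rw [map_add] at hL
      obtain ⟨N, hN⟩ := ih y hy ((Submodule.add_mem_iff_left _ (hJL _ hbJ')).1 hL)
      exact ⟨N, by rw [map_add]; exact Submodule.add_mem _ hN (tJ_F_pow _ _ _ _ _ hbJ')⟩

/-- The key step: a primitive eigenvector of positive weight lies in the Serre ideal. -/
lemma tJ_of_primitive (c : Fin r → Fin r → k) (m : Fin r → Fin r → ℕ) (hc : ∀ i j, c i j = c j i)
    (hs : ∀ i j, i ≠ j → c i j ^ 2 * c i i ^ (m i j) = 1) (i : Fin r)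
    (h0 : c i i ≠ 0) (h1 : ∀ n, c i i ^ (n + 1) ≠ 1)
    (x : FreeAlgebra k (Fin r)) (κ : k) (hx : tK c i x = κ • x)
    (hκ : ∀ n, κ ^ 2 * c i i ^ n ≠ 1)
    (hL : tL c i x ∈ tJ c m) (hR : tR c i x ∈ tJ c m) 
    (hJR : ∀ x ∈ tJ c m, tR c i x ∈ tJ c m) : x ∈ tJ c m := by
  obtain ⟨n, hn⟩ := tD_exists c m i h0 x
  obtain ⟨N, hN⟩ := tF_nil_of_tD c m i (tJ_L c m hc hs i) h1 n x hn hL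
  have h1' : c i i ≠ 1 := by simpa using h1 0
  induction N with
  | zero => simpa using hN
  | succ N ih =>
    apply ih
    have h2 := tR_tF_pow c i (tJ c m) (tJ_F c m i) x κ hx hR h1' N
    have h3 := (Submodule.sub_mem_iff_right _ (hJR _ hN)).1 h2
    refine (Submodule.smul_mem_iff _ ?_).1 h3
    exact div_ne_zero (mul_ne_zero (sub_ne_zero.2 (h1 N)) (sub_ne_zero.2 (hκ N).symm))
      (sub_ne_zero.2 h1')

end AlgSide2

set_option linter.unusedSimpArgs false

section ShuffleSide
variable {r : ℕ}

/-- the product in the free algebra attached to a word -/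
def wd (w : Word r) : FreeAlgebra K (Fin r) := (w.map (FreeAlgebra.ι K)).prod

lemma wd_nil : wd ([] : Word r) = 1 := rfl
lemma wd_cons (a : Fin r) (w : Word r) : wd (a :: w) = FreeAlgebra.ι K a * wd w := by simp [wd]
lemma wd_append (w x : Word r) : wd (w ++ x) = wd w * wd x := by simp [wd]
lemma wd_single (a : Fin r) : wd [a] = FreeAlgebra.ι K a := by simp [wd]
lemma wd_replicate (n : ℕ) (a : Fin r) : wd (List.replicate n a) = FreeAlgebra.ι K a ^ n := by
  simp [wd]

lemma wd_span (x : FreeAlgebra K (Fin r)) : x ∈ Submodule.span K (Set.range (wd (r := r))) := by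
  apply free_left_ind
  · exact Submodule.subset_span ⟨[], rfl⟩
  · intro x hx j
    induction hx using Submodule.span_induction with
    | mem x hx =>
      obtain ⟨w, rfl⟩ := hx
      exact Submodule.subset_span ⟨j :: w, wd_cons _ _⟩
    | zero => simp
    | add y z _ _ hy hz => rw [mul_add]; exact Submodule.add_mem _ hy hz
    | smul a y _ hy => rw [mul_smul_comm]; exact Submodule.smul_mem _ _ hy

/-- bilinear version of the shuffle -/
def shL (p : Fin r → Fin r → ℤ) : FA r →ₗ[K] FA r →ₗ[K] FA r :=
  Finsupp.lsum K fun w => LinearMap.toSpanSingleton K _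
    (Finsupp.lsum K fun x => LinearMap.toSpanSingleton K _ (shAux p w.reverse x.reverse))

lemma shL_eq (p : Fin r → Fin r → ℤ) (f g : FA r) : shL p f g = shuffle p f g := by
  simp only [shL, shuffle, Finsupp.lsum_apply, Finsupp.sum, LinearMap.toSpanSingleton_apply,
    LinearMap.sum_apply, LinearMap.smul_apply, Finset.smul_sum, smul_smul]

lemma shL_single (p : Fin r → Fin r → ℤ) (w x : Word r) :
    shL p (Finsupp.single w 1) (Finsupp.single x 1) = shAux p w.reverse x.reverse := by
  simp [shL]

/-- delete the last letter `c` -/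
def dl (c : Fin r) : FA r →ₗ[K] FA r :=
  Finsupp.lcomapDomain (fun u : Word r => u ++ [c]) (List.append_left_injective [c])

lemma dl_apply (c : Fin r) (f : FA r) (u : Word r) : dl c f u = f (u ++ [c]) := rfl

lemma dl_single_nil (c : Fin r) (a : K) : dl c (Finsupp.single [] a) = 0 := by
  ext u; simp [dl_apply, Finsupp.single_apply]

lemma dl_single_append (c b : Fin r) (w : Word r) (a : K) :
    dl c (Finsupp.single (w ++ [b]) a) = if c = b then Finsupp.single w a else 0 := by
  ext u
  rw [dl_apply, Finsupp.single_apply]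
  split_ifs with h1 h2 h2
  · have := List.append_inj' h1 rfl; rw [this.1]; simp
  · have := List.append_inj' h1 rfl; simp at this; exact absurd this.2.symm h2
  · subst h2
    rw [Finsupp.single_apply, if_neg]; rintro rfl; exact h1 rfl
  · rfl

lemma dl_mapDomain (c b : Fin r) (f : FA r) :
    dl c (Finsupp.mapDomain (fun u => u ++ [b]) f) = if c = b then f else 0 := by
  induction f using Finsupp.induction_linear with
  | zero => simp
  | add f g hf hg => rw [Finsupp.mapDomain_add, map_add, hf, hg]; split_ifs <;> simp
  | single w a => rw [Finsupp.mapDomain_single, dl_single_append]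

/-- diagonal operator on words -/
def kap (p : Fin r → Fin r → ℤ) (c : Fin r) : FA r →ₗ[K] FA r :=
  Finsupp.lsum K fun w => LinearMap.toSpanSingleton K _
    (qq ^ (-(pairW p w [c])) • Finsupp.single w 1)

lemma kap_single (p : Fin r → Fin r → ℤ) (c : Fin r) (w : Word r) (a : K) :
    kap p c (Finsupp.single w a) = (qq ^ (-(pairW p w [c]))) • Finsupp.single w a := by
  simp [kap, mul_comm]

lemma kap_apply (p : Fin r → Fin r → ℤ) (c : Fin r) (f : FA r) (u : Word r) :
    kap p c f u = qq ^ (-(pairW p u [c])) * f u := by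
  induction f using Finsupp.induction_linear with
  | zero => simp
  | add f g hf hg => rw [map_add, Finsupp.add_apply, hf, hg, Finsupp.add_apply]; ring
  | single w a =>
    rw [kap_single, Finsupp.smul_apply, Finsupp.single_apply, smul_eq_mul]
    split_ifs with h
    · rw [h]
    · simp

lemma pairW_reverse (p : Fin r → Fin r → ℤ) (w x : Word r) : pairW p w.reverse x = pairW p w x := by
  simp [pairW, List.sum_reverse]

lemma shAux_nil_right (p : Fin r → Fin r → ℤ) (w : Word r) :
    shAux p w [] = Finsupp.single w.reverse 1 := by
  cases w <;> simp [shAux]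

lemma shAux_nil_left (p : Fin r → Fin r → ℤ) (w : Word r) :
    shAux p [] w = Finsupp.single w.reverse 1 := by
  simp [shAux]

lemma shL_one_left (p : Fin r → Fin r → ℤ) (f : FA r) : shL p (Finsupp.single [] 1) f = f := by
  induction f using Finsupp.induction_linear with
  | zero => simp
  | add f g hf hg => rw [map_add, hf, hg]
  | single w a =>
    rw [← Finsupp.smul_single_one w a, map_smul, shL_single]
    simp [shAux_nil_left]

lemma shL_one_right (p : Fin r → Fin r → ℤ) (f : FA r) : shL p f (Finsupp.single [] 1) = f := by
  induction f using Finsupp.induction_linear with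
  | zero => simp
  | add f g hf hg => rw [map_add, LinearMap.add_apply, hf, hg]
  | single w a =>
    rw [← Finsupp.smul_single_one w a, map_smul, LinearMap.smul_apply, shL_single]
    simp [shAux_nil_right]

lemma dl_shL (p : Fin r → Fin r → ℤ) (c : Fin r) (f g : FA r) :
    dl c (shL p f g) = shL p (dl c f) g + shL p (kap p c f) (dl c g) := by
  induction f using Finsupp.induction_linear with
  | zero => simp
  | add f g hf hg => simp only [map_add, LinearMap.add_apply, hf, hg]; abel
  | single w a =>
    rw [← Finsupp.smul_single_one w a]
    simp only [map_smul, LinearMap.smul_apply, ← smul_add]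
    congr 1
    induction g using Finsupp.induction_linear with
    | zero => simp
    | add f g hf hg => simp only [map_add, LinearMap.add_apply, hf, hg]; abel
    | single x b =>
      rw [← Finsupp.smul_single_one x b]
      simp only [map_smul, LinearMap.smul_apply, ← smul_add]
      congr 1
      rcases List.eq_nil_or_concat w with rfl | ⟨w, a, rfl⟩
      · rw [dl_single_nil, kap_single, shL_one_left]
        simp [pairW, shL_one_left]
      rcases List.eq_nil_or_concat x with rfl | ⟨x, b, rfl⟩
      · rw [dl_single_nil, shL_one_right, shL_one_right]; simp
      simp only [List.concat_eq_append]
      rw [shL_single, List.reverse_append, List.reverse_append, List.reverse_singleton,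
        List.reverse_singleton, List.singleton_append, List.singleton_append, shAux, map_add,
        map_smul, dl_mapDomain, dl_mapDomain, dl_single_append, dl_single_append, kap_single,
        map_smul, LinearMap.smul_apply]
      congr 1
      · split_ifs
        · rw [shL_single]; simp
        · simp
      · split_ifs with h
        · subst h
          rw [shL_single]; simp only [List.reverse_append, List.reverse_singleton,
            List.singleton_append]
          congr 3
          rw [← pairW_reverse]; simp
        · simp

lemma shAux_perm (p : Fin r → Fin r → ℤ) (w x u : Word r) (h : shAux p w x u ≠ 0) :
    u.Perm (w ++ x) := by
  induction w, x using shAux.induct generalizing u with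
  | case1 x =>
    rw [shAux_nil_left, Finsupp.single_apply] at h
    have : x.reverse = u := by by_contra h'; simp [h'] at h
    rw [← this]; simp
  | case2 x hx =>
    rw [shAux_nil_right, Finsupp.single_apply] at h
    have : x.reverse = u := by by_contra h'; simp [h'] at h
    rw [← this]; simp
  | case3 a w b x ih1 ih2 =>
    rw [shAux, Finsupp.add_apply, Finsupp.smul_apply] at h
    have hmap : ∀ (e : Fin r) (f : FA r), Finsupp.mapDomain (fun u => u ++ [e]) f u ≠ 0 →
        ∃ v, u = v ++ [e] ∧ f v ≠ 0 := by
      intro e f hf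
      rcases List.eq_nil_or_concat u with rfl | ⟨v, e', rfl⟩
      · exfalso; apply hf
        apply Finsupp.mapDomain_of_notMem_range
        simp
      · have h2 := dl_mapDomain e' e f
        have h3 := DFunLike.congr_fun h2 v
        rw [dl_apply] at h3
        rw [List.concat_eq_append, h3] at hf
        split_ifs at hf with he
        · exact ⟨v, by simp [he], hf⟩
        · simp at hf
    by_cases h1 : Finsupp.mapDomain (fun u => u ++ [a]) (shAux p w (b :: x)) u = 0
    · rw [h1, zero_add] at h
      obtain ⟨v, rfl, hv⟩ := hmap b _ (right_ne_zero_of_mul h)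
      have := ih2 v hv
      refine (List.perm_append_singleton b v).trans ((this.cons b).trans ?_)
      exact (List.perm_middle (a := b) (l₁ := a :: w) (l₂ := x)).symm
    · obtain ⟨v, rfl, hv⟩ := hmap a _ h1
      exact (List.perm_append_singleton a v).trans ((ih1 v hv).cons a)

lemma shL_single_perm (p : Fin r → Fin r → ℤ) (a : Fin r) (f : FA r) (w : Word r)
    (hf : ∀ u, f u ≠ 0 → u.Perm w) (u : Word r) (h : shL p (Finsupp.single [a] 1) f u ≠ 0) :
    u.Perm (a :: w) := by
  rw [shL_eq, shuffle, Finsupp.sum_single_index (by simp), Finsupp.sum, Finsupp.finsetSum_apply] at h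
  obtain ⟨x, hx, hx'⟩ := Finset.exists_ne_zero_of_sum_ne_zero h
  rw [Finsupp.smul_apply] at hx'
  have h1 := shAux_perm p _ _ _ (right_ne_zero_of_mul hx')
  have h2 := hf x (Finsupp.mem_support_iff.1 hx)
  refine h1.trans ?_
  simp only [List.reverse_singleton, List.singleton_append]
  exact ((List.reverse_perm x).trans h2).cons a

/-- The algebra action of the free algebra by left shuffle multiplication. -/
def PhiA (p : Fin r → Fin r → ℤ) : FreeAlgebra K (Fin r) →ₐ[K] Module.End K (FA r) :=
  FreeAlgebra.lift K (fun a => shL p (Finsupp.single [a] 1))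

/-- The map from the free algebra to the shuffle algebra. -/
def Phi (p : Fin r → Fin r → ℤ) : FreeAlgebra K (Fin r) →ₗ[K] FA r :=
  (LinearMap.applyₗ (Finsupp.single ([] : Word r) (1 : K))).comp (PhiA p).toLinearMap

lemma Phi_one (p : Fin r → Fin r → ℤ) : Phi p 1 = Finsupp.single [] 1 := by
  simp [Phi]

lemma Phi_ι_mul (p : Fin r → Fin r → ℤ) (a : Fin r) (x : FreeAlgebra K (Fin r)) :
    Phi p (FreeAlgebra.ι K a * x) = shL p (Finsupp.single [a] 1) (Phi p x) := by
  simp [Phi, PhiA]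

lemma Phi_ι (p : Fin r → Fin r → ℤ) (a : Fin r) :
    Phi p (FreeAlgebra.ι K a) = Finsupp.single [a] 1 := by
  rw [← mul_one (FreeAlgebra.ι K a), Phi_ι_mul, Phi_one, shL_one_right]

lemma Phi_wd_perm (p : Fin r → Fin r → ℤ) (w : Word r) :
    ∀ u, Phi p (wd w) u ≠ 0 → u.Perm w := by
  induction w with
  | nil =>
    intro u h
    rw [wd_nil, Phi_one, Finsupp.single_apply] at h
    have : [] = u := by by_contra h'; simp [h'] at h
    rw [← this]
  | cons a w ih =>
    intro u h
    rw [wd_cons, Phi_ι_mul] at h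
    exact shL_single_perm p a _ w ih u h

/-- the coefficients `q^{-(α_i, α_j)}` -/
def cf (p : Fin r → Fin r → ℤ) (i j : Fin r) : K := qq ^ (-(p i j))

lemma qq_ne : (qq : K) ≠ 0 := RatFunc.X_ne_zero

lemma tK_wd (p : Fin r → Fin r → ℤ) (hp : ∀ i j, p i j = p j i) (c : Fin r) (w : Word r) :
    tK (cf p) c (wd w) = (qq ^ (-(pairW p w [c]))) • wd w := by
  induction w with
  | nil => simp [wd_nil, pairW]
  | cons a w ih =>
    rw [wd_cons, map_mul, tK_ι, ih, smul_mul_assoc, mul_smul_comm, smul_smul, cf, ← zpow_add₀ qq_ne]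
    congr 2
    simp [pairW, hp c a]
    ring

lemma pairW_perm (p : Fin r → Fin r → ℤ) (u w x : Word r) (h : u.Perm w) :
    pairW p u x = pairW p w x := by
  unfold pairW
  exact (h.map _).sum_eq

lemma kap_Phi (p : Fin r → Fin r → ℤ) (hp : ∀ i j, p i j = p j i) (c : Fin r)
    (x : FreeAlgebra K (Fin r)) : kap p c (Phi p x) = Phi p (tK (cf p) c x) := by
  have hx := wd_span x
  induction hx using Submodule.span_induction with
  | mem x hx =>
    obtain ⟨w, rfl⟩ := hx
    rw [tK_wd p hp, map_smul]
    ext u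
    rw [kap_apply, Finsupp.smul_apply, smul_eq_mul]
    by_cases h : Phi p (wd w) u = 0
    · rw [h]; simp
    · rw [pairW_perm p u w _ (Phi_wd_perm p w u h)]
  | zero => simp
  | add y z _ _ hy hz => simp only [map_add, hy, hz]
  | smul a y _ hy => simp only [map_smul, hy]

lemma dl_Phi (p : Fin r → Fin r → ℤ) (hp : ∀ i j, p i j = p j i) (c : Fin r)
    (x : FreeAlgebra K (Fin r)) : dl c (Phi p x) = Phi p (tL (cf p) c x) := by
  have : x ∈ LinearMap.eqLocus ((dl c).comp (Phi p)) ((Phi p).comp (tL (cf p) c)) := by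
    apply free_left_ind
    · simp [Phi_one, dl_single_nil, tL_one]
    · intro x hx a
      simp only [LinearMap.mem_eqLocus, LinearMap.comp_apply] at hx ⊢
      rw [Phi_ι_mul, dl_shL, hx, tL_mul, map_add, tL_ι, tK_ι, smul_mul_assoc, map_smul, Phi_ι_mul,
        kap_single, map_smul, LinearMap.smul_apply]
      congr 1
      · rw [show [a] = ([] : Word r) ++ [a] from rfl, dl_single_append]
        split_ifs
        · rw [shL_one_left, one_mul]
        · simp
      · congr 1
        simp [pairW, cf, hp c a]
  simpa using this

lemma shL_nil (p : Fin r → Fin r → ℤ) (f g : FA r) : shL p f g [] = f [] * g [] := by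
  induction f using Finsupp.induction_linear with
  | zero => simp
  | add f g hf hg => simp only [map_add, LinearMap.add_apply, Finsupp.add_apply, hf, hg]; ring
  | single w a =>
    rw [← Finsupp.smul_single_one w a]
    simp only [map_smul, LinearMap.smul_apply, Finsupp.smul_apply, smul_eq_mul, mul_assoc]
    congr 1
    induction g using Finsupp.induction_linear with
    | zero => simp
    | add f g hf hg => simp only [map_add, LinearMap.add_apply, Finsupp.add_apply, hf, hg]; ring
    | single x b =>
      rw [← Finsupp.smul_single_one x b]
      simp only [map_smul, LinearMap.smul_apply, Finsupp.smul_apply, smul_eq_mul]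
      rw [mul_left_comm]
      congr 1
      rw [shL_single]
      by_cases h : w = [] ∧ x = []
      · obtain ⟨rfl, rfl⟩ := h; simp [shAux_nil_left]
      · have h1 : shAux p w.reverse x.reverse [] = 0 := by
          by_contra h'
          have := (shAux_perm p _ _ _ h').nil_eq
          simp at this
          exact h this
        rw [h1, Finsupp.single_apply, Finsupp.single_apply]
        split_ifs with h2 h3
        · exact absurd ⟨h2, h3⟩ h
        all_goals simp

lemma Phi_mul_nil (p : Fin r → Fin r → ℤ) (x y : FreeAlgebra K (Fin r)) :
    Phi p (x * y) [] = Phi p x [] * Phi p y [] := by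
  have := free_left_ind (k := K) (r := r)
    { carrier := {x | Phi p (x * y) [] = Phi p x [] * Phi p y []}
      zero_mem' := by simp
      add_mem' := by
        intro a b ha hb
        simp only [Set.mem_ofPred_eq, add_mul, map_add, Finsupp.add_apply] at ha hb ⊢
        rw [ha, hb]
      smul_mem' := by
        intro a b hb
        simp only [Set.mem_ofPred_eq, smul_mul_assoc, map_smul, Finsupp.smul_apply,
          smul_eq_mul] at hb ⊢
        rw [hb, mul_assoc] } (by simp [Phi_one]) (by
        intro x _ a
        simp only [Submodule.mem_mk, AddSubmonoid.mem_mk, AddSubsemigroup.mem_mk, Set.mem_ofPred_eq]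
        rw [mul_assoc, Phi_ι_mul, Phi_ι_mul, shL_nil, shL_nil]
        simp) x
  exact this

lemma Phi_mul (p : Fin r → Fin r → ℤ) (hp : ∀ i j, p i j = p j i) (x y : FreeAlgebra K (Fin r)) :
    Phi p (x * y) = shL p (Phi p x) (Phi p y) := by
  ext u
  induction u using List.reverseRecOn generalizing x y with
  | nil => rw [Phi_mul_nil, shL_nil]
  | append_singleton u c ih =>
    rw [← dl_apply, ← dl_apply, dl_shL, dl_Phi p hp, dl_Phi p hp, dl_Phi p hp, kap_Phi p hp, tL_mul,
      map_add, Finsupp.add_apply, Finsupp.add_apply, ih, ih]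

lemma InU_iff (p : Fin r → Fin r → ℤ) (hp : ∀ i j, p i j = p j i) (f : FA r) :
    InU p f ↔ f ∈ LinearMap.range (Phi p) := by
  constructor
  · intro h
    induction h with
    | letter i => exact ⟨_, Phi_ι p i⟩
    | one => exact ⟨_, Phi_one p⟩
    | add _ _ h1 h2 => exact Submodule.add_mem _ h1 h2
    | smul c _ h => exact Submodule.smul_mem _ _ h
    | mul _ _ h1 h2 =>
      obtain ⟨x, rfl⟩ := h1
      obtain ⟨y, rfl⟩ := h2
      exact ⟨x * y, by rw [Phi_mul p hp, shL_eq]⟩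
  · rintro ⟨x, rfl⟩
    have hx := wd_span x
    induction hx using Submodule.span_induction with
    | mem x hx =>
      obtain ⟨w, rfl⟩ := hx
      induction w with
      | nil => rw [wd_nil, Phi_one]; exact InU.one
      | cons a w ih => rw [wd_cons, Phi_ι_mul, shL_eq]; exact InU.mul (InU.letter a) ih
    | zero =>
      have := InU.smul (p := p) 0 InU.one
      rw [zero_smul] at this
      simpa using this
    | add y z _ _ hy hz => rw [map_add]; exact InU.add hy hz
    | smul a y _ hy => rw [map_smul]; exact InU.smul _ hy

end ShuffleSide

set_option linter.unusedSimpArgs false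

section Expand

variable {k : Type*} [Field k] {r : ℕ}

lemma tS_expand (c : Fin r → Fin r → k) (i j : Fin r) (a : ℕ → ℕ → k) (ha0 : ∀ n, a n 0 = 1)
    (ha1 : ∀ n, a n (n + 1) = 0)
    (ha : ∀ n l, a (n + 1) (l + 1) = a n (l + 1) - c i i ^ n * c i j * a n l) (n : ℕ) :
    tS c i j n = ∑ l ∈ Finset.range (n + 1), a n l •
      (FreeAlgebra.ι k i ^ l * FreeAlgebra.ι k j * FreeAlgebra.ι k i ^ (n - l)) := by
  induction n with
  | zero => simp [tS, ha0]
  | succ n ih =>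
    rw [tS] at ih
    rw [tS, pow_succ', Module.End.mul_apply, ih, map_sum]
    have h1 : ∀ l ∈ Finset.range (n + 1), tF c i (a n l •
        (FreeAlgebra.ι k i ^ l * FreeAlgebra.ι k j * FreeAlgebra.ι k i ^ (n - l))) =
        a n l • (FreeAlgebra.ι k i ^ l * FreeAlgebra.ι k j * FreeAlgebra.ι k i ^ (n + 1 - l))
        - (c i i ^ n * c i j * a n l) •
        (FreeAlgebra.ι k i ^ (l + 1) * FreeAlgebra.ι k j * FreeAlgebra.ι k i ^ (n + 1 - (l + 1))) := by
      intro l hl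
      have hl' : l ≤ n := by have := Finset.mem_range.1 hl; omega
      obtain ⟨e, rfl⟩ := Nat.exists_eq_add_of_le hl'
      have e1 : l + e - l = e := by omega
      have e2 : l + e + 1 - l = e + 1 := by omega
      have e3 : l + e + 1 - (l + 1) = e := by omega
      rw [e1, e2, e3, map_smul, tF_apply, map_mul, map_mul, tK_pow_self, tK_pow_self, tK_ι]
      simp only [smul_mul_assoc, mul_smul_comm, smul_smul, smul_sub]
      congr 1
      · simp only [pow_succ, mul_assoc]
      · rw [pow_succ' _ l]
        simp only [mul_assoc]
        congr 1
        rw [pow_add]; ring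
    rw [Finset.sum_congr rfl h1, Finset.sum_sub_distrib, Finset.sum_range_succ' _ (n + 1)]
    have h2 : ∑ l ∈ Finset.range (n + 1), a n l •
        (FreeAlgebra.ι k i ^ l * FreeAlgebra.ι k j * FreeAlgebra.ι k i ^ (n + 1 - l)) =
        ∑ l ∈ Finset.range (n + 1 + 1), a n l •
        (FreeAlgebra.ι k i ^ l * FreeAlgebra.ι k j * FreeAlgebra.ι k i ^ (n + 1 - l)) := by
      rw [Finset.sum_range_succ _ (n + 1), ha1, zero_smul, add_zero]
    rw [h2, Finset.sum_range_succ' _ (n + 1), ha0, ha0, add_sub_right_comm, ← Finset.sum_sub_distrib]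
    congr 1
    refine Finset.sum_congr rfl fun l _ => ?_
    rw [← sub_smul, ha]

end Expand

section Binom

lemma qq_zpow_ne_one (n : ℤ) (hn : n ≠ 0) : (qq : K) ^ n ≠ 1 := by
  have key : ∀ n : ℕ, n ≠ 0 → (qq : K) ^ n ≠ 1 := by
    intro n hn h
    have h1 : algebraMap (Polynomial ℚ) K (Polynomial.X ^ n) = algebraMap (Polynomial ℚ) K 1 := by
      rw [map_pow, RatFunc.algebraMap_X, map_one]; exact h
    have h2 := RatFunc.algebraMap_injective ℚ h1
    have h3 := congrArg Polynomial.natDegree h2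
    simp at h3
    exact hn h3
  intro h
  obtain ⟨m, rfl | rfl⟩ := n.eq_nat_or_neg
  · rw [zpow_natCast] at h; exact key m (by omega) h
  · rw [zpow_neg, inv_eq_one, zpow_natCast] at h; exact key m (by omega) h

lemma qden_ne (d n : ℤ) (h : d * n ≠ 0) : (qq : K) ^ (d * n) - qq ^ (-(d * n)) ≠ 0 := by
  intro h'
  have h2 := sub_eq_zero.1 h'
  have : (qq : K) ^ (d * n + d * n) = 1 := by
    rw [zpow_add₀ qq_ne]; nth_rewrite 1 [h2]; rw [← zpow_add₀ qq_ne]; simp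
  exact qq_zpow_ne_one _ (by omega) this

lemma qInt_ne (d n : ℤ) (hd : d ≠ 0) (hn : n ≠ 0) : qInt d n ≠ 0 := by
  refine div_ne_zero (qden_ne d n (mul_ne_zero hd hn)) ?_
  simpa using qden_ne d 1 (by simpa using hd)

lemma qInt_zero (d : ℤ) : qInt d 0 = 0 := by simp [qInt]

lemma qBinom_zero (d : ℤ) (n : ℕ) : qBinom d n 0 = 1 := by simp [qBinom]

lemma qBinom_self_succ (d : ℤ) (n : ℕ) : qBinom d n (n + 1) = 0 := by
  rw [qBinom, Finset.prod_range_succ]; simp [qInt_zero]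

lemma qBinom_pascal (d : ℤ) (hd : d ≠ 0) (n k : ℕ) :
    qBinom d (n + 1) (k + 1) * qq ^ (-(d * (k + 1))) =
      qBinom d n (k + 1) + qq ^ (-(d * (n + 1))) * qBinom d n k := by
  have hk : qInt d ((k : ℤ) + 1) ≠ 0 := qInt_ne d _ hd (by omega)
  have e1 : qBinom d (n + 1) (k + 1) = qInt d (n + 1) / qInt d (k + 1) * qBinom d n k := by
    rw [qBinom, Finset.prod_range_succ', Finset.prod_range_succ (fun t : ℕ => qInt d ((t : ℤ) + 1)),
      qBinom]
    have : ∀ t ∈ Finset.range k, qInt d (((n + 1 : ℕ) : ℤ) - ((t + 1 : ℕ) : ℤ))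
        = qInt d ((n : ℤ) - t) := by
      intro t _; congr 1; push_cast; ring
    rw [Finset.prod_congr rfl this]
    push_cast
    rw [sub_zero]
    ring
  have e2 : qBinom d n (k + 1) = qInt d (n - k) / qInt d (k + 1) * qBinom d n k := by
    rw [qBinom, Finset.prod_range_succ, Finset.prod_range_succ (fun t : ℕ => qInt d ((t : ℤ) + 1)),
      qBinom]
    ring
  rw [e1, e2]
  have key : qInt d (n + 1) * qq ^ (-(d * (k + 1))) =
      qInt d (n - k) + qq ^ (-(d * (n + 1))) * qInt d (k + 1) := by
    simp only [qInt]
    have e : ∀ a b c e f g D : K, a * c = e + b * f → (a / D) * c = e / D + b * (f / D) := by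
      intro a b c e f g D h
      rw [div_mul_eq_mul_div, h]; ring
    refine e _ _ _ _ _ 0 _ ?_
    simp only [sub_mul, mul_sub, ← zpow_add₀ qq_ne]
    ring_nf
  field_simp
  linear_combination (qBinom d n k) * key

end Binom

section Serre
variable {r : ℕ}

lemma tS_serre (p : Fin r → Fin r → ℤ) (i j : Fin r) (d : ℤ) (hd : d ≠ 0) (m : ℕ)
    (hii : p i i = 2 * d) (hij : p i j = - (d * m)) :
    tS (cf p) i j (m + 1) = ∑ l ∈ Finset.range (m + 1 + 1), ((-1) ^ l * qBinom d (m + 1) l) •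
      (FreeAlgebra.ι K i ^ l * FreeAlgebra.ι K j * FreeAlgebra.ι K i ^ (m + 1 - l)) := by
  rw [tS_expand (cf p) i j
    (fun n l => (-1) ^ l * qBinom d n l * qq ^ (d * l * m - d * l * (n - 1)))]
  · refine Finset.sum_congr rfl fun l _ => ?_
    congr 1
    rw [show d * l * m - d * l * (((m + 1 : ℕ) : ℤ) - 1) = 0 by push_cast; ring]
    simp
  · intro n; simp [qBinom_zero]
  · intro n; simp [qBinom_self_succ]
  · intro n l
    have hp := qBinom_pascal d hd n l
    simp only [cf, hii, hij]
    rw [← zpow_natCast (qq ^ (-(2 * d))) n, ← zpow_mul, pow_succ]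
    have e1 : (qq : K) ^ (d * ((l + 1 : ℕ) : ℤ) * m - d * ((l + 1 : ℕ) : ℤ) * (((n + 1 : ℕ) : ℤ) - 1))
      = qq ^ (-(d * (l + 1))) *
        qq ^ (d * ((l + 1 : ℕ) : ℤ) * m - d * ((l + 1 : ℕ) : ℤ) * ((n : ℤ) - 1)) := by
      rw [← zpow_add₀ qq_ne]; congr 1; push_cast; ring
    have e2 : (qq : K) ^ (-(2 * d) * (n : ℤ)) * qq ^ (-(-(d * (m : ℤ)))) *
        ((-1) ^ l * qBinom d n l * qq ^ (d * (l : ℤ) * m - d * l * ((n : ℤ) - 1)))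
        = (-1) ^ l * qBinom d n l * (qq ^ (-(d * (n + 1))) *
        qq ^ (d * ((l + 1 : ℕ) : ℤ) * m - d * ((l + 1 : ℕ) : ℤ) * ((n : ℤ) - 1))) := by
      have : (qq : K) ^ (-(2 * d) * (n : ℤ)) * qq ^ (-(-(d * (m : ℤ)))) *
        qq ^ (d * (l : ℤ) * m - d * l * ((n : ℤ) - 1)) = qq ^ (-(d * (n + 1))) *
        qq ^ (d * ((l + 1 : ℕ) : ℤ) * m - d * ((l + 1 : ℕ) : ℤ) * ((n : ℤ) - 1)) := by
        simp only [← zpow_add₀ qq_ne]; congr 1; push_cast; ring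
      rw [← this]; ring
    rw [e1, e2]
    linear_combination (-((-1) ^ l *
      qq ^ (d * ((l + 1 : ℕ) : ℤ) * m - d * ((l + 1 : ℕ) : ℤ) * ((n : ℤ) - 1)))) * hp

end Serre

set_option linter.unusedSimpArgs false

section Pairing
variable {r : ℕ}

/-- action of the free algebra by deletion operators -/
def rho : FreeAlgebra K (Fin r) →ₐ[K] Module.End K (FA r) :=
  FreeAlgebra.lift K (fun a => dl a)

/-- the word pairing -/
def prL : FreeAlgebra K (Fin r) →ₗ[K] FA r →ₗ[K] K :=
  (LinearMap.compRight K (Finsupp.lapply ([] : Word r))).comp (rho (r := r)).toLinearMap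

lemma prL_apply (x : FreeAlgebra K (Fin r)) (f : FA r) : prL x f = rho x f [] := rfl

lemma prL_mul_ι (x : FreeAlgebra K (Fin r)) (b : Fin r) (f : FA r) :
    prL (x * FreeAlgebra.ι K b) f = prL x (dl b f) := by
  simp [prL_apply, rho]

lemma rho_wd (u v : Word r) (f : FA r) : rho (wd u) f v = f (v ++ u) := by
  induction u generalizing v with
  | nil => simp [wd_nil]
  | cons a u ih =>
    rw [wd_cons, map_mul, Module.End.mul_apply]
    have : rho (FreeAlgebra.ι K a) = dl (r := r) a := by simp [rho]
    rw [this, dl_apply, ih]; simp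

lemma prL_wd (u : Word r) (f : FA r) : prL (wd u) f = f u := by
  rw [prL_apply, rho_wd]; simp

lemma prL_kap (p : Fin r → Fin r → ℤ) (hp : ∀ i j, p i j = p j i) (a : Fin r)
    (x : FreeAlgebra K (Fin r)) (f : FA r) : prL x (kap p a f) = prL (tK (cf p) a x) f := by
  have hx := wd_span x
  induction hx using Submodule.span_induction with
  | mem x hx =>
    obtain ⟨w, rfl⟩ := hx
    rw [tK_wd p hp, map_smul, LinearMap.smul_apply, prL_wd, prL_wd, kap_apply, smul_eq_mul]
  | zero => simp
  | add y z _ _ hy hz => simp only [map_add, LinearMap.add_apply, hy, hz]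
  | smul a y _ hy => simp only [map_smul, LinearMap.smul_apply, hy]

lemma prL_one (f : FA r) : prL 1 f = f [] := by rw [← wd_nil, prL_wd]

lemma prL_shL_left (p : Fin r → Fin r → ℤ) (hp : ∀ i j, p i j = p j i) (a : Fin r)
    (x : FreeAlgebra K (Fin r)) (f : FA r) :
    prL x (shL p (Finsupp.single [a] 1) f) = prL (tR (cf p) a x) f := by
  have : x ∈ LinearMap.eqLocus ((LinearMap.lcomp K K (shL p (Finsupp.single [a] 1))).comp prL)
      (prL.comp (tR (cf p) a)) := by
    apply free_right_ind
    · rw [LinearMap.mem_eqLocus]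
      apply LinearMap.ext
      intro f
      simp only [LinearMap.comp_apply, LinearMap.lcomp_apply]
      rw [prL_one, tR_one, shL_nil]
      simp
    · intro x hx b
      rw [LinearMap.mem_eqLocus] at hx ⊢
      apply LinearMap.ext
      intro f
      have hx' := fun f => LinearMap.congr_fun hx f
      simp only [LinearMap.comp_apply, LinearMap.lcomp_apply] at hx' ⊢
      rw [prL_mul_ι, dl_shL, map_add, kap_single, map_smul, LinearMap.smul_apply, map_smul, hx',
        tR_mul, tK_ι, mul_smul_comm, map_add, map_smul, LinearMap.add_apply, LinearMap.smul_apply,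
        prL_mul_ι, tR_ι, add_comm]
      congr 1
      · congr 1
        simp [pairW, cf]
      · rw [show [a] = ([] : Word r) ++ [a] from rfl, dl_single_append]
        by_cases h : a = b
        · subst h; simp [shL_one_left]
        · simp [h, Ne.symm h]
  exact LinearMap.congr_fun this f

lemma prL_shL_right (p : Fin r → Fin r → ℤ) (hp : ∀ i j, p i j = p j i) (a : Fin r)
    (x : FreeAlgebra K (Fin r)) (f : FA r) :
    prL x (shL p f (Finsupp.single [a] 1)) = prL (tL (cf p) a x) f := by
  have : x ∈ LinearMap.eqLocus
      ((LinearMap.lcomp K K ((shL p).flip (Finsupp.single [a] 1))).comp prL)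
      (prL.comp (tL (cf p) a)) := by
    apply free_right_ind
    · rw [LinearMap.mem_eqLocus]
      apply LinearMap.ext
      intro f
      simp only [LinearMap.comp_apply, LinearMap.lcomp_apply, LinearMap.flip_apply]
      rw [prL_one, tL_one, shL_nil]
      simp
    · intro x hx b
      rw [LinearMap.mem_eqLocus] at hx ⊢
      apply LinearMap.ext
      intro f
      have hx' := fun f => LinearMap.congr_fun hx f
      simp only [LinearMap.comp_apply, LinearMap.lcomp_apply, LinearMap.flip_apply] at hx' ⊢
      rw [prL_mul_ι, dl_shL, map_add, hx', tL_mul, map_add, LinearMap.add_apply, prL_mul_ι, tL_ι]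
      congr 1
      rw [show [a] = ([] : Word r) ++ [a] from rfl, dl_single_append]
      by_cases h : a = b
      · subst h; simp [shL_one_right, prL_kap p hp]
      · simp [h, Ne.symm h]
  exact LinearMap.congr_fun this f

/-- elements pairing to zero with the image of `Phi` -/
def IsRad (p : Fin r → Fin r → ℤ) (x : FreeAlgebra K (Fin r)) : Prop := ∀ y, prL x (Phi p y) = 0

lemma IsRad.L {p : Fin r → Fin r → ℤ} (hp : ∀ i j, p i j = p j i) {x : FreeAlgebra K (Fin r)}
    (h : IsRad p x) (a : Fin r) : IsRad p (tL (cf p) a x) := by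
  intro y
  rw [← prL_shL_right p hp, ← Phi_ι p a, ← Phi_mul p hp]; exact h _

lemma IsRad.R {p : Fin r → Fin r → ℤ} (hp : ∀ i j, p i j = p j i) {x : FreeAlgebra K (Fin r)}
    (h : IsRad p x) (a : Fin r) : IsRad p (tR (cf p) a x) := by
  intro y
  rw [← prL_shL_left p hp, ← Phi_ι p a, ← Phi_mul p hp]; exact h _

lemma tS_eps (p : Fin r → Fin r → ℤ) (i j : Fin r) (n : ℕ) :
    Phi p (tS (cf p) i j (n + 1)) [] = 0 := by
  rw [tS, pow_succ', Module.End.mul_apply, tF_apply, map_sub, Finsupp.sub_apply, Phi_mul_nil,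
    Phi_mul_nil, Phi_ι]
  simp

lemma prL_one_right (x : FreeAlgebra K (Fin r)) (p : Fin r → Fin r → ℤ) :
    prL x (Finsupp.single [] 1) = Phi p x [] := by
  have hx := wd_span x
  induction hx using Submodule.span_induction with
  | mem x hx =>
    obtain ⟨w, rfl⟩ := hx
    rw [prL_wd]
    cases w with
    | nil => rw [wd_nil, Phi_one]
    | cons a w => rw [wd_cons, Phi_ι_mul, shL_nil]; simp
  | zero => simp
  | add y z _ _ hy hz => simp only [map_add, LinearMap.add_apply, hy, hz, Finsupp.add_apply]
  | smul a y _ hy => simp only [map_smul, LinearMap.smul_apply, hy, Finsupp.smul_apply]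

lemma tJ_rad (p : Fin r → Fin r → ℤ) (m : Fin r → Fin r → ℕ) (hp : ∀ i j, p i j = p j i)
    (hJR : ∀ l, ∀ x ∈ tJ (cf p) m, tR (cf p) l x ∈ tJ (cf p) m)
    (x : FreeAlgebra K (Fin r)) (hx : x ∈ tJ (cf p) m) : IsRad p x := by
  intro y
  have hy := wd_span y
  induction hy using Submodule.span_induction with
  | mem y hy =>
    obtain ⟨w, rfl⟩ := hy
    induction w generalizing x with
    | nil =>
      rw [wd_nil, Phi_one, prL_one_right x p]
      induction hx using Submodule.span_induction with
      | mem x hx =>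
        obtain ⟨i, j, -, a, b, rfl⟩ := hx
        rw [Phi_mul_nil, Phi_mul_nil, tS_eps]; simp
      | zero => simp
      | add y z _ _ hy hz => simp [hy, hz]
      | smul a y _ hy => simp [hy]
    | cons a w ih =>
      rw [wd_cons, Phi_ι_mul, prL_shL_left p hp]
      exact ih _ (hJR _ _ hx)
  | zero => simp
  | add y z _ _ hy hz => simp only [map_add, hy, hz, add_zero]
  | smul a y _ hy => simp only [map_smul, hy, smul_zero]

/-- homogeneous elements of given degree -/
def tH (ν : Multiset (Fin r)) : Submodule K (FreeAlgebra K (Fin r)) :=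
  Submodule.span K {x | ∃ u : Word r, (u : Multiset (Fin r)) = ν ∧ x = wd u}

/-- homogeneous elements of degree `ν - α_a` -/
def tH' (a : Fin r) (ν : Multiset (Fin r)) : Submodule K (FreeAlgebra K (Fin r)) :=
  Submodule.span K {x | ∃ u : Word r, a ::ₘ (u : Multiset (Fin r)) = ν ∧ x = wd u}

lemma tH'_mul (a b : Fin r) (ν : Multiset (Fin r)) (x : FreeAlgebra K (Fin r)) (hx : x ∈ tH' a ν) :
    x * FreeAlgebra.ι K b ∈ tH' a (b ::ₘ ν) ∧ FreeAlgebra.ι K b * x ∈ tH' a (b ::ₘ ν) := by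
  induction hx using Submodule.span_induction with
  | mem x hx =>
    obtain ⟨u, rfl, rfl⟩ := hx
    constructor
    · refine Submodule.subset_span ⟨u ++ [b], ?_, by rw [wd_append, wd_single]⟩
      rw [Multiset.cons_swap, ← Multiset.coe_add, Multiset.coe_singleton, add_comm,
        Multiset.singleton_add]
    · refine Submodule.subset_span ⟨b :: u, ?_, by rw [wd_cons]⟩
      rw [Multiset.cons_swap]; rfl
  | zero => simp
  | add y z _ _ hy hz =>
    rw [mul_add, add_mul]
    exact ⟨Submodule.add_mem _ hy.1 hz.1, Submodule.add_mem _ hy.2 hz.2⟩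
  | smul a y _ hy =>
    rw [mul_smul_comm, smul_mul_assoc]
    exact ⟨Submodule.smul_mem _ _ hy.1, Submodule.smul_mem _ _ hy.2⟩

lemma tL_wd (c : Fin r → Fin r → K) (a : Fin r) (w : Word r) : tL c a (wd w) ∈ tH' a (w : Multiset (Fin r)) := by
  induction w with
  | nil => rw [wd_nil, tL_one]; exact Submodule.zero_mem _
  | cons b w ih =>
    rw [wd_cons, tL_mul, tK_ι, tL_ι, smul_mul_assoc]
    refine Submodule.add_mem _ ?_ (Submodule.smul_mem _ _ (tH'_mul a b _ _ ih).2)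
    split_ifs with h
    · subst h; rw [one_mul]; exact Submodule.subset_span ⟨w, rfl, rfl⟩
    · simp

lemma tR_wd (c : Fin r → Fin r → K) (a : Fin r) (w : Word r) : tR c a (wd w) ∈ tH' a (w : Multiset (Fin r)) := by
  induction w with
  | nil => rw [wd_nil, tR_one]; exact Submodule.zero_mem _
  | cons b w ih =>
    have h2 : tK c a (wd w) ∈ Submodule.span K {wd w} := by
      clear ih
      induction w with
      | nil => rw [wd_nil, map_one]; exact Submodule.subset_span rfl
      | cons e w ih =>
        obtain ⟨s, hs⟩ := Submodule.mem_span_singleton.1 ih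
        rw [wd_cons, map_mul, tK_ι, ← hs]
        exact Submodule.mem_span_singleton.2 ⟨c a e * s, by
          rw [smul_mul_assoc, mul_smul_comm, smul_smul]⟩
    obtain ⟨s, hs⟩ := Submodule.mem_span_singleton.1 h2
    rw [wd_cons, tR_mul, tR_ι, ← hs]
    refine Submodule.add_mem _ ?_ (tH'_mul a b _ _ ih).2
    split_ifs with h
    · subst h; rw [one_mul]; exact Submodule.smul_mem _ _ (Submodule.subset_span ⟨w, rfl, rfl⟩)
    · simp

lemma tH_L (c : Fin r → Fin r → K) (a : Fin r) (ν : Multiset (Fin r)) (x : FreeAlgebra K (Fin r))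
    (hx : x ∈ tH ν) : tL c a x ∈ tH' a ν := by
  induction hx using Submodule.span_induction with
  | mem x hx => obtain ⟨u, rfl, rfl⟩ := hx; exact tL_wd _ _ _
  | zero => simp
  | add y z _ _ hy hz => rw [map_add]; exact Submodule.add_mem _ hy hz
  | smul a y _ hy => rw [map_smul]; exact Submodule.smul_mem _ _ hy

lemma tH_R (c : Fin r → Fin r → K) (a : Fin r) (ν : Multiset (Fin r)) (x : FreeAlgebra K (Fin r))
    (hx : x ∈ tH ν) : tR c a x ∈ tH' a ν := by
  induction hx using Submodule.span_induction with
  | mem x hx => obtain ⟨u, rfl, rfl⟩ := hx; exact tR_wd _ _ _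
  | zero => simp
  | add y z _ _ hy hz => rw [map_add]; exact Submodule.add_mem _ hy hz
  | smul a y _ hy => rw [map_smul]; exact Submodule.smul_mem _ _ hy

lemma tH'_cases (a : Fin r) (ν : Multiset (Fin r)) (x : FreeAlgebra K (Fin r)) (hx : x ∈ tH' a ν) :
    x = 0 ∨ ∃ μ, a ::ₘ μ = ν ∧ x ∈ tH μ := by
  by_cases h : a ∈ ν
  · obtain ⟨μ, rfl⟩ := Multiset.exists_cons_of_mem h
    right
    refine ⟨μ, rfl, ?_⟩
    have : tH' a (a ::ₘ μ) = tH μ := by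
      simp only [tH', tH, Multiset.cons_inj_right]
    rwa [this] at hx
  · left
    have : tH' a ν = ⊥ := by
      rw [tH', Submodule.span_eq_bot]
      rintro x ⟨u, rfl, -⟩
      simp at h
    rwa [this, Submodule.mem_bot] at hx

/-- pairing of a degree with a simple root -/
def wt (p : Fin r → Fin r → ℤ) (ν : Multiset (Fin r)) (i : Fin r) : ℤ :=
  (ν.map fun j => p j i).sum

lemma tH_K (p : Fin r → Fin r → ℤ) (hp : ∀ i j, p i j = p j i) (i : Fin r) (ν : Multiset (Fin r))
    (x : FreeAlgebra K (Fin r)) (hx : x ∈ tH ν) : tK (cf p) i x = (qq ^ (-(wt p ν i))) • x := by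
  induction hx using Submodule.span_induction with
  | mem x hx =>
    obtain ⟨u, rfl, rfl⟩ := hx
    rw [tK_wd p hp]; simp [pairW, wt]
  | zero => simp
  | add y z _ _ hy hz => rw [map_add, hy, hz, smul_add]
  | smul a y _ hy => rw [map_smul, hy, smul_comm]

lemma exists_wt_pos (C : CartanData r) (ν : Multiset (Fin r)) (hν : ν ≠ 0) :
    ∃ i, 0 < wt C.p ν i := by
  by_contra! h
  have hv : (fun i => (ν.count i : ℚ)) ≠ 0 := by
    intro h0
    apply hν
    ext i
    have := congrFun h0 i
    simpa using this
  have h1 := C.posdef _ hv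
  have hw : ∀ i, (wt C.p ν i : ℚ) = ∑ j, (ν.count j : ℚ) * ((C.d i * C.a i j : ℤ) : ℚ) := by
    intro i
    rw [wt, Finset.sum_multiset_map_count]
    push_cast
    rw [Finset.sum_subset (Finset.subset_univ _)]
    · refine Finset.sum_congr rfl fun j _ => ?_
      have := C.dsymm i j
      simp only [CartanData.p, nsmul_eq_mul]
      rw [← this]; push_cast; ring
    · intro j _ hj
      have : ν.count j = 0 := by simpa using hj
      rw [this]; simp
  have h2 : ∑ i, ∑ j, (ν.count i : ℚ) * (ν.count j : ℚ) * ((C.d i * C.a i j : ℤ) : ℚ)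
      = ∑ i, (ν.count i : ℚ) * (wt C.p ν i : ℚ) := by
    refine Finset.sum_congr rfl fun i _ => ?_
    rw [hw, Finset.mul_sum]
    exact Finset.sum_congr rfl fun j _ => by ring
  rw [h2] at h1
  have h3 : ∑ i, (ν.count i : ℚ) * (wt C.p ν i : ℚ) ≤ 0 :=
    Finset.sum_nonpos fun i _ => mul_nonpos_of_nonneg_of_nonpos (by positivity)
      (by exact_mod_cast h i)
  linarith

end Pairing

set_option linter.unusedSimpArgs false

section Final
variable {r : ℕ}

/-- the exponents `-a_{ij}` -/
def CartanData.m (C : CartanData r) (i j : Fin r) : ℕ := (-(C.a i j)).toNat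

lemma C_dpos (C : CartanData r) (i : Fin r) : 0 < C.d i := by
  rcases C.dval i with h | h | h <;> omega

lemma C_m (C : CartanData r) {i j : Fin r} (h : i ≠ j) : (C.m i j : ℤ) = -(C.a i j) :=
  Int.toNat_of_nonneg (by have := C.offdiag i j h; omega)

lemma C_symm (C : CartanData r) (i j : Fin r) : C.p i j = C.p j i := C.dsymm i j

lemma C_hc (C : CartanData r) (i j : Fin r) : cf C.p i j = cf C.p j i := by
  simp only [cf, C_symm C i j]

lemma C_pii (C : CartanData r) (i : Fin r) : C.p i i = 2 * C.d i := by
  simp only [CartanData.p, C.diag]; ring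

lemma C_hs (C : CartanData r) (i j : Fin r) (h : i ≠ j) :
    cf C.p i j ^ 2 * cf C.p i i ^ (C.m i j) = 1 := by
  simp only [cf]
  rw [← zpow_natCast, ← zpow_natCast, ← zpow_mul, ← zpow_mul, ← zpow_add₀ qq_ne, C_m C h, C_pii]
  rw [← zpow_zero qq]
  congr 1
  simp only [CartanData.p]; push_cast; ring

lemma C_pow (C : CartanData r) (i : Fin r) (n : ℕ) : cf C.p i i ^ (n + 1) ≠ 1 := by
  simp only [cf]
  rw [← zpow_natCast, ← zpow_mul, C_pii]
  apply qq_zpow_ne_one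
  have := C_dpos C i
  have h2 : 0 < 2 * C.d i * ((n + 1 : ℕ) : ℤ) := by positivity
  intro h; push_cast at h h2; linarith

lemma C_one (C : CartanData r) (i : Fin r) : cf C.p i i ≠ 1 := by
  simpa using C_pow C i 0

lemma C_R (C : CartanData r) (l : Fin r) (x : FreeAlgebra K (Fin r)) (hx : x ∈ tJ (cf C.p) C.m) :
    tR (cf C.p) l x ∈ tJ (cf C.p) C.m :=
  tJ_R (cf C.p) C.m (C_hc C) (C_one C) (C_hs C) l x hx

lemma rad_sub_J (C : CartanData r) (n : ℕ) : ∀ ν : Multiset (Fin r), Multiset.card ν = n →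
    ∀ x ∈ tH ν, IsRad C.p x → x ∈ tJ (cf C.p) C.m := by
  induction n with
  | zero =>
    intro ν hν x hx hr
    have hν : ν = 0 := Multiset.card_eq_zero.1 hν
    subst hν
    have h1 : tH (0 : Multiset (Fin r)) ≤ Submodule.span K {1} := by
      refine Submodule.span_mono ?_
      rintro y ⟨u, hu, rfl⟩
      have : u = [] := by simpa using hu
      subst this
      rw [wd_nil]; rfl
    obtain ⟨s, rfl⟩ := Submodule.mem_span_singleton.1 (h1 hx)
    have h2 := hr 1
    rw [map_smul, LinearMap.smul_apply, prL_one, Phi_one] at h2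
    have : s = 0 := by simpa using h2
    rw [this, zero_smul]; exact Submodule.zero_mem _
  | succ n ih =>
    intro ν hν x hx hr
    have hν0 : ν ≠ 0 := by rintro rfl; simp at hν
    obtain ⟨i, hi⟩ := exists_wt_pos C ν hν0
    have key : ∀ y ∈ tH' i ν, IsRad C.p y → y ∈ tJ (cf C.p) C.m := by
      intro y hy hry
      rcases tH'_cases i ν y hy with rfl | ⟨μ, rfl, hμ⟩
      · exact Submodule.zero_mem _
      · exact ih μ (by simpa using hν) y hμ hry
    refine tJ_of_primitive (cf C.p) C.m (C_hc C) (C_hs C) i ?_ (C_pow C i) x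
      (qq ^ (-(wt C.p ν i))) (tH_K C.p (C_symm C) i ν x hx) ?_
      (key _ (tH_L _ _ _ _ hx) (hr.L (C_symm C) i))
      (key _ (tH_R _ _ _ _ hx) (hr.R (C_symm C) i)) (C_R C i)
    · exact zpow_ne_zero _ qq_ne
    · intro n
      simp only [cf]
      rw [← zpow_natCast, ← zpow_natCast, ← zpow_mul, ← zpow_mul, ← zpow_add₀ qq_ne, C_pii]
      apply qq_zpow_ne_one
      have := C_dpos C i
      have h2 : 0 ≤ 2 * C.d i * (n : ℤ) := by positivity
      push_cast
      intro h
      linarith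

lemma prL_serre (C : CartanData r) {i j : Fin r} (h : i ≠ j) (z t : Word r) (f : FA r) :
    prL (wd z * tS (cf C.p) i j (C.m i j + 1) * wd t) f =
      ∑ k ∈ Finset.range ((1 - C.a i j).toNat + 1),
          (-1 : K) ^ k * qBinom (C.d i) ((1 - C.a i j).toNat) k *
            f (z ++ List.replicate k i ++ [j]
                ++ List.replicate ((1 - C.a i j).toNat - k) i ++ t) := by
  have hm : (1 - C.a i j).toNat = C.m i j + 1 := by
    have h1 := C_m C h
    have h2 := C.offdiag i j h
    omega
  rw [hm, tS_serre C.p i j (C.d i) (C_dpos C i).ne' (C.m i j) (C_pii C i)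
    (by rw [C_m C h]; simp only [CartanData.p]; ring), Finset.mul_sum, Finset.sum_mul, map_sum,
    LinearMap.sum_apply]
  refine Finset.sum_congr rfl fun k _ => ?_
  rw [← prL_wd, wd_append, wd_append, wd_append, wd_append, wd_replicate, wd_replicate, wd_single,
    mul_smul_comm, smul_mul_assoc, map_smul, LinearMap.smul_apply, smul_eq_mul]
  simp only [mul_assoc]

lemma serre_J (C : CartanData r) (f : FA r)
    (H : ∀ (i j : Fin r), i ≠ j → ∀ z t : Word r,
      prL (wd z * tS (cf C.p) i j (C.m i j + 1) * wd t) f = 0)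
    (x : FreeAlgebra K (Fin r)) (hx : x ∈ tJ (cf C.p) C.m) : prL x f = 0 := by
  induction hx using Submodule.span_induction with
  | mem x hx =>
    obtain ⟨i, j, hij, a, b, rfl⟩ := hx
    have ha := wd_span a
    induction ha using Submodule.span_induction with
    | mem a ha =>
      obtain ⟨z, rfl⟩ := ha
      have hb := wd_span b
      induction hb using Submodule.span_induction with
      | mem b hb =>
        obtain ⟨t, rfl⟩ := hb
        exact H i j hij z t
      | zero => simp
      | add y z _ _ hy hz => rw [mul_add, map_add, LinearMap.add_apply, hy, hz, add_zero]
      | smul a y _ hy => rw [mul_smul_comm, map_smul, LinearMap.smul_apply, hy, smul_zero]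
    | zero => simp
    | add y z _ _ hy hz => rw [add_mul, add_mul, map_add, LinearMap.add_apply, hy, hz, add_zero]
    | smul a y _ hy =>
      rw [smul_mul_assoc, smul_mul_assoc, map_smul, LinearMap.smul_apply, hy, smul_zero]
  | zero => simp
  | add y z _ _ hy hz => rw [map_add, LinearMap.add_apply, hy, hz, add_zero]
  | smul a y _ hy => rw [map_smul, LinearMap.smul_apply, hy, smul_zero]

/-- the degree `ν` component of a functional, as an element of the free algebra -/
def xnu (φ : FA r →ₗ[K] K) (ν : Multiset (Fin r)) : FreeAlgebra K (Fin r) :=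
  ∑ u ∈ ν.lists.toFinset, φ (Finsupp.single u 1) • wd u

lemma mem_lists' (ν : Multiset (Fin r)) (u : Word r) :
    u ∈ ν.lists.toFinset ↔ (u : Multiset (Fin r)) = ν := by
  rw [Multiset.mem_toFinset, Multiset.mem_lists_iff]
  exact eq_comm

lemma xnu_mem (φ : FA r →ₗ[K] K) (ν : Multiset (Fin r)) : xnu φ ν ∈ tH ν :=
  Submodule.sum_mem _ fun u hu => Submodule.smul_mem _ _
    (Submodule.subset_span ⟨u, (mem_lists' ν u).1 hu, rfl⟩)

lemma functional_apply (φ : FA r →ₗ[K] K) (g : FA r) :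
    φ g = ∑ u ∈ g.support, φ (Finsupp.single u 1) * g u := by
  conv_lhs => rw [← Finsupp.sum_single g]
  rw [Finsupp.sum, map_sum]
  refine Finset.sum_congr rfl fun u _ => ?_
  rw [← mul_one (g u), ← smul_eq_mul (g u) 1, ← Finsupp.smul_single, map_smul, smul_eq_mul,
    smul_eq_mul, mul_one, mul_comm]

lemma prL_xnu (φ : FA r →ₗ[K] K) (ν : Multiset (Fin r)) (g : FA r) :
    prL (xnu φ ν) g =
      ∑ u ∈ g.support.filter (fun u : Word r => (u : Multiset (Fin r)) = ν), φ (Finsupp.single u 1) * g u := by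
  rw [xnu, map_sum, LinearMap.sum_apply]
  have : ∀ u ∈ ν.lists.toFinset, prL (φ (Finsupp.single u 1) • wd u) g
      = φ (Finsupp.single u 1) * g u := by
    intro u _
    rw [map_smul, LinearMap.smul_apply, prL_wd, smul_eq_mul]
  rw [Finset.sum_congr rfl this]
  symm
  apply Finset.sum_subset
  · intro u hu
    exact (mem_lists' ν u).2 (Finset.mem_filter.1 hu).2
  · intro u hu hu'
    have : g u = 0 := by
      by_contra h
      exact hu' (Finset.mem_filter.2 ⟨Finsupp.mem_support_iff.2 h, (mem_lists' ν u).1 hu⟩)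
    rw [this, mul_zero]

lemma xnu_rad (p : Fin r → Fin r → ℤ) (φ : FA r →ₗ[K] K) (hφ : ∀ y, φ (Phi p y) = 0)
    (ν : Multiset (Fin r)) : IsRad p (xnu φ ν) := by
  intro y
  have hy := wd_span y
  induction hy using Submodule.span_induction with
  | mem y hy =>
    obtain ⟨w, rfl⟩ := hy
    rw [prL_xnu]
    by_cases h : (w : Multiset (Fin r)) = ν
    · rw [Finset.filter_true_of_mem, ← functional_apply, hφ]
      intro u hu
      rw [← h, Multiset.coe_eq_coe]
      exact Phi_wd_perm p w u (Finsupp.mem_support_iff.1 hu)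
    · rw [Finset.filter_false_of_mem, Finset.sum_empty]
      intro u hu hu'
      apply h
      rw [← hu', Multiset.coe_eq_coe]
      exact (Phi_wd_perm p w u (Finsupp.mem_support_iff.1 hu)).symm
  | zero => simp
  | add y z _ _ hy hz => simp only [map_add, hy, hz, add_zero]
  | smul a y _ hy => simp only [map_smul, hy, smul_zero]

lemma functional_sum (φ : FA r →ₗ[K] K) (g : FA r) :
    φ g = ∑ ν ∈ g.support.image (fun u : Word r => (u : Multiset (Fin r))), prL (xnu φ ν) g := by
  rw [functional_apply]
  simp only [prL_xnu]
  exact (Finset.sum_fiberwise_of_maps_to (g := fun u : Word r => (u : Multiset (Fin r)))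
    (fun u hu => Finset.mem_image_of_mem _ hu) _).symm

end Final

/-- Theorem 2.6: `f = Σ_w γ(w) w` belongs to `𝒰` if and only if for all `i ≠ j` and all
words `z, t` : `Σ_{k=0}^{1−a_{ij}} (−1)^k [1−a_{ij} choose k]_i γ(z w_i^k w_j w_i^{1−a_{ij}−k} t) = 0`. -/
theorem mem_U_iff_serre_relations {r : ℕ} (hr : 1 ≤ r) (C : CartanData r) (f : FA r) :
    InU C.p f ↔
      ∀ (i j : Fin r), i ≠ j → ∀ z t : Word r,
        ∑ k ∈ Finset.range ((1 - C.a i j).toNat + 1),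
          (-1 : K) ^ k * qBinom (C.d i) ((1 - C.a i j).toNat) k *
            f (z ++ List.replicate k i ++ [j]
                ++ List.replicate ((1 - C.a i j).toNat - k) i ++ t) = 0 := by
  rw [InU_iff C.p (C_symm C)]
  constructor
  · rintro ⟨y, rfl⟩ i j hij z t
    rw [← prL_serre C hij]
    refine tJ_rad C.p C.m (C_symm C) (C_R C) _ ?_ y
    exact Submodule.subset_span ⟨i, j, hij, wd z, wd t, rfl⟩
  · intro H
    have HJ := serre_J C f (fun i j hij z t => by rw [prL_serre C hij]; exact H i j hij z t)
    by_contra hf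
    obtain ⟨φ, hφf, hφ⟩ := Submodule.exists_le_ker_of_notMem hf
    apply hφf
    rw [functional_sum φ f]
    refine Finset.sum_eq_zero fun ν _ => HJ _ ?_
    exact rad_sub_J C _ ν rfl _ (xnu_mem φ ν) (xnu_rad C.p φ (fun y => hφ ⟨y, rfl⟩) ν)
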